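/- Let N ≥ 3, θ ≥ p > 1, λ, γ > 0, and set β := 2(θ+1)/(pθ−1). There exist constants ε₁ > 0 and τ ∈ (0, 1), depending only on N, p, θ, λ, γ, such that the following holds: if Ω ⊂ ℝ^N is open, (u, v) is a pair of functions in C²(Ω), positive in Ω, satisfying −Δu = λ(v+1)^p and −Δv = γ(u+1)^θ in Ω and stable, and z ∈ Ω and R₀ > 0 are such that the closed ball B_{R₀}(z) is contained in Ω and G₀ := R₀^{2β−N} ∫_{B_{R₀}(z)} (v+1)² dx ≤ ε₁, then (τR₀)^{2β−N} ∫_{B_{τR₀}(z)} (v+1)² dx ≤ G₀/2. -/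

import Mathlib

open MeasureTheory Metric Real Set

noncomputable section

/-- The Euclidean Laplacian `Δw(x) = ∑ i, ∂²w/∂xᵢ²(x)` on `ℝ^N`. -/
def lap {N : ℕ} (w : EuclideanSpace ℝ (Fin N) → ℝ) (x : EuclideanSpace ℝ (Fin N)) : ℝ :=
  ∑ i : Fin N,
    fderiv ℝ (fun y => fderiv ℝ w y (EuclideanSpace.single i 1)) x (EuclideanSpace.single i 1)

/-- `φ` is a smooth compactly supported test function with support inside `Ω`. -/
def IsTestFun {N : ℕ} (Ω : Set (EuclideanSpace ℝ (Fin N)))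
    (φ : EuclideanSpace ℝ (Fin N) → ℝ) : Prop :=
  ContDiff ℝ (⊤ : ℕ∞) φ ∧ HasCompactSupport φ ∧ tsupport φ ⊆ Ω

/-- Stability of a classical solution of `-Δu = λ(v+1)^p, -Δv = γ(u+1)^θ` in `Ω`:
`√(λγpθ) ∫_Ω (v+1)^((p-1)/2) (u+1)^((θ-1)/2) φ² ≤ ∫_Ω |∇φ|²` for all test functions. -/
def IsStable {N : ℕ} (Ω : Set (EuclideanSpace ℝ (Fin N))) (lam gam p θ : ℝ)
    (u v : EuclideanSpace ℝ (Fin N) → ℝ) : Prop :=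
  ∀ φ : EuclideanSpace ℝ (Fin N) → ℝ, IsTestFun Ω φ →
    Real.sqrt (lam * gam * p * θ) *
        ∫ x in Ω, (v x + 1) ^ ((p - 1) / 2) * (u x + 1) ^ ((θ - 1) / 2) * φ x ^ 2
      ≤ ∫ x in Ω, ‖gradient φ x‖ ^ 2

/-- `(u,v)` is a positive classical solution of `-Δu = λ(v+1)^p, -Δv = γ(u+1)^θ` in `Ω`. -/
def IsSolution {N : ℕ} (Ω : Set (EuclideanSpace ℝ (Fin N))) (lam gam p θ : ℝ)
    (u v : EuclideanSpace ℝ (Fin N) → ℝ) : Prop :=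
  ContDiffOn ℝ 2 u Ω ∧ ContDiffOn ℝ 2 v Ω ∧
  (∀ x ∈ Ω, 0 < u x) ∧ (∀ x ∈ Ω, 0 < v x) ∧
  (∀ x ∈ Ω, -lap u x = lam * (v x + 1) ^ p) ∧
  (∀ x ∈ Ω, -lap v x = gam * (u x + 1) ^ θ)

/-- The quartic polynomial `L`. -/
def Lpoly (p θ s : ℝ) : ℝ :=
  s ^ 4 - (16 * p * θ * (p + 1) / (θ + 1)) * s ^ 2
    + (16 * p * θ * (p + 1) * (p + θ + 2) / (θ + 1) ^ 2) * s
    - 16 * p * θ * (p + 1) ^ 2 / (θ + 1) ^ 2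

/-!
After a rescaling we may work on the unit ball, with `U, V` solving `-ΔU = λ V^p`, `-ΔV = γ U^θ` and
`V` of `L²` norm `m ≪ 1`. Comparing `U` with a multiple of `V^σ`, `σ = (p+1)/(θ+1)`, gives
`U ≤ b V^σ` wherever `U` is not already so small that `U^θ ≲ m`. Where this bound holds, `-ΔV` is at
most a multiple of `V^(σθ)`, and stability, tested with `V` times a cutoff, beats Caccioppoli's
inequality and controls `∫ |∇V|²` and `∫ U^θ V` by `m²`.

Since `σθ > 1`, the source `min(U^θ, V^(σθ))` then has integral `≲ (t^(σθ-1) + m/t) m` for every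
`t > 0`. By Fubini the Newtonian potential of the source is `≥ m` only on a set whose measure is
as small as we like, and off that set the mean value formula gives `V ≤ L m`. Hence `∫ V²` decays
like `τ^N` off the exceptional set, while on it Sobolev's inequality gains a positive power of its
measure. Choosing first `τ`, then `t`, then `m` small yields the factor `1/2`.
-/

open Filter Topology

local notation "𝔼[" n "]" => EuclideanSpace ℝ (Fin n)

section Calculus

variable {N : ℕ} {f g : 𝔼[N] → ℝ} {x : 𝔼[N]}

/-- The `i`-th partial derivative of `w`, with the junk value `0` where `w` is not
differentiable. -/
def partialDeriv (i : Fin N) (w : 𝔼[N] → ℝ) (x : 𝔼[N]) : ℝ :=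
  fderiv ℝ w x (EuclideanSpace.single i 1)

theorem lap_eq_sum_partialDeriv (w : 𝔼[N] → ℝ) (x : 𝔼[N]) :
    lap w x = ∑ i, partialDeriv i (partialDeriv i w) x := rfl

theorem lap_eq_laplacian (hf : ContDiffAt ℝ 2 f x) : lap f x = Laplacian.laplacian f x := by
  have hf' : DifferentiableAt ℝ (fderiv ℝ f) x :=
    (hf.fderiv_right (m := 1) (by norm_num)).differentiableAt (by norm_num)
  rw [InnerProductSpace.laplacian_eq_iteratedFDeriv_orthonormalBasis f
    (EuclideanSpace.basisFun (Fin N) ℝ)]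
  refine Finset.sum_congr rfl fun i _ => ?_
  rw [iteratedFDeriv_two_apply, fderiv_clm_apply hf' (differentiableAt_const _)]
  simp

theorem fderiv_apply_eq_sum_partialDeriv (f : 𝔼[N] → ℝ) (x y : 𝔼[N]) :
    fderiv ℝ f x y = ∑ i, y i * partialDeriv i f x := by
  conv_lhs => rw [← (EuclideanSpace.basisFun (Fin N) ℝ).sum_repr y, map_sum]
  simp [partialDeriv]

theorem norm_gradient (f : 𝔼[N] → ℝ) (x : 𝔼[N]) : ‖gradient f x‖ = ‖fderiv ℝ f x‖ :=
  LinearIsometryEquiv.norm_map _ _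

theorem norm_gradient_sq_eq_sum (f : 𝔼[N] → ℝ) (x : 𝔼[N]) :
    ‖gradient f x‖ ^ 2 = ∑ i, partialDeriv i f x ^ 2 := by
  have hcoord : ∀ i, gradient f x i = partialDeriv i f x := fun i => by
    rw [partialDeriv, ← InnerProductSpace.toDual_symm_apply, EuclideanSpace.inner_single_right]
    simp [gradient]
  simp_rw [EuclideanSpace.norm_sq_eq, hcoord, Real.norm_eq_abs, sq_abs]

theorem partialDeriv_congr (h : f =ᶠ[𝓝 x] g) (i : Fin N) :
    partialDeriv i f x = partialDeriv i g x := by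
  rw [partialDeriv, h.fderiv_eq, partialDeriv]

theorem lap_congr (h : f =ᶠ[𝓝 x] g) : lap f x = lap g x :=
  Finset.sum_congr rfl fun i _ => partialDeriv_congr
    (h.eventually_nhds.mono fun _ hy => partialDeriv_congr hy i) i

theorem lap_eq_zero_of_notMem_tsupport (hx : x ∉ tsupport f) : lap f x = 0 := by
  rw [lap_congr (notMem_tsupport_iff_eventuallyEq.mp hx)]
  simp [lap, Pi.zero_def]

theorem gradient_eq_zero_of_notMem_tsupport (hx : x ∉ tsupport f) : gradient f x = 0 := by
  rw [(notMem_tsupport_iff_eventuallyEq.mp hx).gradient_eq, Pi.zero_def, gradient_fun_const]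

theorem hasCompactSupport_partialDeriv (hf : HasCompactSupport f) (i : Fin N) :
    HasCompactSupport (partialDeriv i f) :=
  hf.fderiv_apply (𝕜 := ℝ) _

theorem hasCompactSupport_lap (hf : HasCompactSupport f) : HasCompactSupport (lap f) :=
  .intro hf fun _ hx => lap_eq_zero_of_notMem_tsupport hx

theorem hasCompactSupport_gradient (hf : HasCompactSupport f) :
    HasCompactSupport (gradient f) :=
  .intro hf fun _ hx => gradient_eq_zero_of_notMem_tsupport hx

theorem contDiff_partialDeriv {m n : WithTop ℕ∞} (hf : ContDiff ℝ n f) (hmn : m + 1 ≤ n)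
    (i : Fin N) : ContDiff ℝ m (partialDeriv i f) :=
  (hf.fderiv_right hmn).clm_apply contDiff_const

theorem differentiableAt_partialDeriv (hf : ContDiffAt ℝ 2 f x) (i : Fin N) :
    DifferentiableAt ℝ (partialDeriv i f) x :=
  ((hf.fderiv_right (m := 1) (by norm_num)).differentiableAt (by norm_num)).clm_apply
    (differentiableAt_const _)

theorem continuous_partialDeriv (hf : ContDiff ℝ 1 f) (i : Fin N) :
    Continuous (partialDeriv i f) :=
  (contDiff_partialDeriv (m := 0) hf (by norm_num) i).continuous

theorem continuous_gradient (hf : ContDiff ℝ 1 f) : Continuous (gradient f) :=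
  (LinearIsometryEquiv.continuous _).comp (hf.continuous_fderiv (by norm_num))

theorem continuous_lap (hf : ContDiff ℝ 2 f) : Continuous (lap f) :=
  continuous_finsetSum _ fun i _ =>
    continuous_partialDeriv (contDiff_partialDeriv hf (by norm_num) i) i

theorem partialDeriv_mul (hf : DifferentiableAt ℝ f x) (hg : DifferentiableAt ℝ g x)
    (i : Fin N) : partialDeriv i (fun y => f y * g y) x =
      f x * partialDeriv i g x + g x * partialDeriv i f x := by
  simp [partialDeriv, fderiv_fun_mul hf hg]

theorem partialDeriv_const_mul (c : ℝ) (f : 𝔼[N] → ℝ) (i : Fin N) :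
    partialDeriv i (fun y => c * f y) x = c * partialDeriv i f x := by
  rw [partialDeriv, show (fun y => c * f y) = c • f from rfl, fderiv_const_smul_field]
  rfl

theorem partialDeriv_comp {h : ℝ → ℝ} {h' : ℝ} (hh : HasDerivAt h h' (f x))
    (hf : DifferentiableAt ℝ f x) (i : Fin N) :
    partialDeriv i (fun y => h (f y)) x = h' * partialDeriv i f x := by
  have hcomp : HasFDerivAt (fun y => h (f y)) (h' • fderiv ℝ f x) x :=
    hh.comp_hasFDerivAt x hf.hasFDerivAt
  simp [partialDeriv, hcomp.fderiv]

theorem lap_comp {h h' : ℝ → ℝ} {h'' : ℝ} (hh : ∀ᶠ t in 𝓝 (f x), HasDerivAt h (h' t) t)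
    (hh' : HasDerivAt h' h'' (f x)) (hf : ContDiffAt ℝ 2 f x) :
    lap (fun y => h (f y)) x = h' (f x) * lap f x + h'' * ‖gradient f x‖ ^ 2 := by
  rw [lap_eq_sum_partialDeriv, lap_eq_sum_partialDeriv, norm_gradient_sq_eq_sum, Finset.mul_sum,
    Finset.mul_sum, ← Finset.sum_add_distrib]
  refine Finset.sum_congr rfl fun i _ => ?_
  have hfirst : partialDeriv i (fun y => h (f y)) =ᶠ[𝓝 x]
      fun y => h' (f y) * partialDeriv i f y := by
    filter_upwards [hf.continuousAt.eventually hh, hf.eventually (by simp)] with y hhy hfy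
    exact partialDeriv_comp hhy (hfy.differentiableAt (by norm_num)) i
  have hdf : DifferentiableAt ℝ f x := hf.differentiableAt (by norm_num)
  rw [partialDeriv_congr hfirst, partialDeriv_mul
    (f := fun y => h' (f y)) (hh'.differentiableAt.comp x hdf)
    (differentiableAt_partialDeriv hf i), partialDeriv_comp hh' hdf]
  ring

theorem lap_sub_const_mul (hf : ContDiffAt ℝ 2 f x) (hg : ContDiffAt ℝ 2 g x) (c : ℝ) :
    lap (fun y => f y - c * g y) x = lap f x - c * lap g x := by
  have hcg : ContDiffAt ℝ 2 (c • g) x := contDiffAt_const.smul hg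
  have hsub : ContDiffAt ℝ 2 (f - c • g) x := hf.sub hcg
  rw [show (fun y => f y - c * g y) = f - c • g from rfl, lap_eq_laplacian hsub,
    lap_eq_laplacian hf, lap_eq_laplacian hg, hf.laplacian_sub hcg,
    InnerProductSpace.laplacian_smul c hg, smul_eq_mul]

theorem partialDeriv_comp_add_smul (f : 𝔼[N] → ℝ) (z : 𝔼[N]) (r : ℝ) (i : Fin N) :
    partialDeriv i (fun y => f (z + r • y)) x = r * partialDeriv i f (z + r • x) := by
  rw [partialDeriv, partialDeriv, fderiv_comp_smul (f := fun y => f (z + y)), fderiv_comp_add_left,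
    smul_apply, smul_eq_mul]

theorem lap_comp_add_smul (f : 𝔼[N] → ℝ) (z : 𝔼[N]) (r : ℝ) :
    lap (fun y => f (z + r • y)) x = r ^ 2 * lap f (z + r • x) := by
  have hfirst : ∀ i, partialDeriv i (fun y => f (z + r • y)) =
      fun y => r * partialDeriv i f (z + r • y) := fun i =>
    funext fun y => partialDeriv_comp_add_smul f z r i
  simp_rw [lap_eq_sum_partialDeriv, Finset.mul_sum, hfirst, partialDeriv_const_mul,
    partialDeriv_comp_add_smul]
  ring_nf

theorem contDiff_mul_of_tsupport_subset {n : WithTop ℕ∞} {χ : 𝔼[N] → ℝ} {S : Set 𝔼[N]}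
    (hS : IsOpen S) (hχ : ContDiff ℝ n χ) (hχS : tsupport χ ⊆ S) (hf : ContDiffOn ℝ n f S) :
    ContDiff ℝ n fun x => χ x * f x := by
  refine contDiff_iff_contDiffAt.mpr fun x => ?_
  by_cases hx : x ∈ S
  · exact hχ.contDiffAt.mul (hf.contDiffAt (hS.mem_nhds hx))
  · refine contDiffAt_const (c := 0) |>.congr_of_eventuallyEq ?_
    filter_upwards [notMem_tsupport_iff_eventuallyEq.mp (notMem_subset hχS hx)] with y hy
    rw [hy, Pi.zero_apply, zero_mul]

/-! ### Integration by parts -/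

theorem integral_mul_partialDeriv (hf : ContDiff ℝ 1 f) (hg : ContDiff ℝ 1 g)
    (hgc : HasCompactSupport g) (i : Fin N) :
    ∫ x, f x * partialDeriv i g x = -∫ x, partialDeriv i f x * g x :=
  integral_mul_fderiv_eq_neg_fderiv_mul_of_integrable
    (((continuous_partialDeriv hf i).mul hg.continuous).integrable_of_hasCompactSupport
      hgc.mul_left)
    ((hf.continuous.mul (continuous_partialDeriv hg i)).integrable_of_hasCompactSupport
      (hasCompactSupport_partialDeriv hgc i).mul_left)
    ((hf.continuous.mul hg.continuous).integrable_of_hasCompactSupport hgc.mul_left)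
    (fun x _ => hf.differentiable (by norm_num) x)
    (fun x _ => hg.differentiable (by norm_num) x)

theorem integral_sum_mul_partialDeriv {G : Fin N → 𝔼[N] → ℝ} (hG : ∀ i, ContDiff ℝ 1 (G i))
    (hg : ContDiff ℝ 1 g) (hgc : HasCompactSupport g) :
    ∫ x, ∑ i, G i x * partialDeriv i g x = -∫ x, (∑ i, partialDeriv i (G i) x) * g x := by
  simp_rw [Finset.sum_mul]
  rw [integral_finsetSum, integral_finsetSum, ← Finset.sum_neg_distrib]
  · exact Finset.sum_congr rfl fun i _ => integral_mul_partialDeriv (hG i) hg hgc i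
  · exact fun i _ => ((continuous_partialDeriv (hG i) i).mul
      hg.continuous).integrable_of_hasCompactSupport hgc.mul_left
  · exact fun i _ => ((hG i).continuous.mul
      (continuous_partialDeriv hg i)).integrable_of_hasCompactSupport
      (hasCompactSupport_partialDeriv hgc i).mul_left

theorem integral_sum_partialDeriv_mul_partialDeriv (hf : ContDiff ℝ 2 f) (hg : ContDiff ℝ 1 g)
    (hgc : HasCompactSupport g) :
    ∫ x, ∑ i, partialDeriv i f x * partialDeriv i g x = -∫ x, lap f x * g x :=
  integral_sum_mul_partialDeriv (fun i => contDiff_partialDeriv hf (by norm_num) i) hg hgc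

theorem integral_lap_mul (hf : ContDiff ℝ 2 f) (hg : ContDiff ℝ 2 g)
    (hgc : HasCompactSupport g) : ∫ x, lap f x * g x = ∫ x, f x * lap g x := by
  have hf₁ : ContDiff ℝ 1 f := hf.of_le (by norm_num)
  have hg₁ : ContDiff ℝ 1 g := hg.of_le (by norm_num)
  have hg' : ∀ i, ContDiff ℝ 1 (partialDeriv i g) := contDiff_partialDeriv hg (by norm_num)
  have hgc' := hasCompactSupport_partialDeriv hgc
  rw [← neg_eq_iff_eq_neg.mpr (integral_sum_partialDeriv_mul_partialDeriv hf hg₁ hgc)]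
  simp_rw [lap_eq_sum_partialDeriv g, Finset.mul_sum]
  rw [integral_finsetSum, integral_finsetSum, ← Finset.sum_neg_distrib]
  · exact Finset.sum_congr rfl fun i _ =>
      (integral_mul_partialDeriv hf₁ (hg' i) (hgc' i) i).symm
  · exact fun i _ => (hf.continuous.mul
      (continuous_partialDeriv (hg' i) i)).integrable_of_hasCompactSupport
      (hasCompactSupport_partialDeriv (hgc' i) i).mul_left
  · exact fun i _ => ((continuous_partialDeriv hf₁ i).mul
      (hg' i).continuous).integrable_of_hasCompactSupport (hgc' i).mul_left

theorem norm_gradient_mul_sq (hf : DifferentiableAt ℝ f x) (hg : DifferentiableAt ℝ g x) :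
    ‖gradient (fun y => f y * g y) x‖ ^ 2 = f x ^ 2 * ‖gradient g x‖ ^ 2 +
      ∑ i, partialDeriv i f x * partialDeriv i (fun y => f y * g y ^ 2) x := by
  simp_rw [norm_gradient_sq_eq_sum, Finset.mul_sum, ← Finset.sum_add_distrib]
  refine Finset.sum_congr rfl fun i _ => ?_
  rw [partialDeriv_mul hf hg, partialDeriv_mul hf (hg.fun_pow 2),
    partialDeriv_comp (hasDerivAt_pow 2 (g x)) hg]
  ring

theorem integral_norm_gradient_mul_sq (hf : ContDiff ℝ 2 f) (hg : ContDiff ℝ 1 g)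
    (hgc : HasCompactSupport g) :
    ∫ x, ‖gradient (fun y => f y * g y) x‖ ^ 2 =
      (∫ x, f x ^ 2 * ‖gradient g x‖ ^ 2) + ∫ x, -lap f x * f x * g x ^ 2 := by
  have hf₁ : ContDiff ℝ 1 f := hf.of_le (by norm_num)
  have hfg : ContDiff ℝ 1 fun y => f y * g y ^ 2 := hf₁.mul (hg.pow 2)
  have hfgc : HasCompactSupport fun y => f y * g y ^ 2 :=
    (hgc.comp_left (g := (· ^ 2)) (by norm_num)).mul_left
  have hgradc : HasCompactSupport fun y => ‖gradient g y‖ ^ 2 :=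
    (hasCompactSupport_gradient hgc).comp_left (g := fun v => ‖v‖ ^ 2) (by norm_num)
  rw [integral_congr_ae (.of_forall fun x => norm_gradient_mul_sq
    (hf₁.differentiable (by norm_num) x) (hg.differentiable (by norm_num) x)), integral_add,
    integral_sum_partialDeriv_mul_partialDeriv hf hfg hfgc, ← integral_neg]
  · simp_rw [neg_mul, mul_assoc]
  · exact ((hf.continuous.pow 2).mul
      ((continuous_gradient hg).norm.pow 2)).integrable_of_hasCompactSupport hgradc.mul_left
  · exact integrable_finsetSum _ fun i _ => ((continuous_partialDeriv hf₁ i).mul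
      (continuous_partialDeriv hfg i)).integrable_of_hasCompactSupport
      (hasCompactSupport_partialDeriv hfgc i).mul_left

end Calculus

/-! ### Mean value formulas -/

section Truncation

theorem hasDerivAt_comp_max_zero {g g' : ℝ → ℝ} (hg : ∀ t, 0 ≤ t → HasDerivAt g (g' t) t)
    (hg₀ : g' 0 = 0) (t : ℝ) : HasDerivAt (fun s => g (max s 0)) (g' (max t 0)) t := by
  rcases lt_trichotomy t 0 with ht | rfl | ht
  · rw [max_eq_right ht.le, hg₀]
    refine (hasDerivAt_const t (g 0)).congr_of_eventuallyEq ?_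
    filter_upwards [gt_mem_nhds ht] with s hs
    rw [max_eq_right hs.le]
  · rw [max_self, hg₀]
    have hright : HasDerivWithinAt (fun s => g (max s 0)) 0 (Ici 0) 0 :=
      (hg₀ ▸ (hg 0 le_rfl).hasDerivWithinAt).congr (fun s hs => by rw [max_eq_left hs]) (by simp)
    have hleft : HasDerivWithinAt (fun s => g (max s 0)) 0 (Iic 0) 0 :=
      (hasDerivWithinAt_const 0 (Iic 0) (g 0)).congr (fun s hs => by rw [max_eq_right hs])
        (by simp)
    simpa [Ici_union_Iic] using hright.union hleft
  · rw [max_eq_left ht.le]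
    refine (hg t ht.le).congr_of_eventuallyEq ?_
    filter_upwards [lt_mem_nhds ht] with s hs
    rw [max_eq_left hs.le]

/-- A convex `C²` approximation of the positive part, at distance at most `2 * δ` from it. -/
def smoothPosPart (δ t : ℝ) : ℝ := max t 0 ^ 3 / (max t 0 + δ) ^ 2

/-- The derivative of `smoothPosPart δ`. -/
def smoothPosPartDeriv (δ t : ℝ) : ℝ := (max t 0 ^ 3 + 3 * δ * max t 0 ^ 2) / (max t 0 + δ) ^ 3

/-- The second derivative of `smoothPosPart δ`. -/
def smoothPosPartDeriv₂ (δ t : ℝ) : ℝ := 6 * δ ^ 2 * max t 0 / (max t 0 + δ) ^ 4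

variable {δ : ℝ}

theorem hasDerivAt_smoothPosPart (hδ : 0 < δ) (t : ℝ) :
    HasDerivAt (smoothPosPart δ) (smoothPosPartDeriv δ t) t := by
  refine hasDerivAt_comp_max_zero (g := fun s => s ^ 3 / (s + δ) ^ 2)
    (g' := fun s => (s ^ 3 + 3 * δ * s ^ 2) / (s + δ) ^ 3) (fun s hs => ?_) (by norm_num) t
  have hsδ : s + δ ≠ 0 := by positivity
  refine ((hasDerivAt_pow 3 s).fun_div (((hasDerivAt_id' s).add_const δ).fun_pow 2)
    (pow_ne_zero 2 hsδ)).congr_deriv ?_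
  field_simp
  ring

theorem hasDerivAt_smoothPosPartDeriv (hδ : 0 < δ) (t : ℝ) :
    HasDerivAt (smoothPosPartDeriv δ) (smoothPosPartDeriv₂ δ t) t := by
  refine hasDerivAt_comp_max_zero (g := fun s => (s ^ 3 + 3 * δ * s ^ 2) / (s + δ) ^ 3)
    (g' := fun s => 6 * δ ^ 2 * s / (s + δ) ^ 4) (fun s hs => ?_) (by norm_num) t
  have hsδ : s + δ ≠ 0 := by positivity
  refine (((hasDerivAt_pow 3 s).fun_add ((hasDerivAt_pow 2 s).const_mul (3 * δ))).fun_div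
    (((hasDerivAt_id' s).add_const δ).fun_pow 3) (pow_ne_zero 3 hsδ)).congr_deriv ?_
  field_simp
  ring

theorem contDiff_smoothPosPart (hδ : 0 < δ) : ContDiff ℝ 2 (smoothPosPart δ) := by
  have hderiv : deriv (smoothPosPart δ) = smoothPosPartDeriv δ :=
    funext fun t => (hasDerivAt_smoothPosPart hδ t).deriv
  have hderiv₂ : deriv (smoothPosPartDeriv δ) = smoothPosPartDeriv₂ δ :=
    funext fun t => (hasDerivAt_smoothPosPartDeriv hδ t).deriv
  have hcont : Continuous (smoothPosPartDeriv₂ δ) :=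
    Continuous.div (by fun_prop) (by fun_prop) fun t => by positivity
  rw [show (2 : WithTop ℕ∞) = 1 + 1 by norm_num, contDiff_succ_iff_deriv, hderiv,
    contDiff_one_iff_deriv, hderiv₂]
  exact ⟨fun t => (hasDerivAt_smoothPosPart hδ t).differentiableAt, by simp,
    fun t => (hasDerivAt_smoothPosPartDeriv hδ t).differentiableAt, hcont⟩

theorem smoothPosPart_nonneg (δ t : ℝ) : 0 ≤ smoothPosPart δ t :=
  div_nonneg (pow_nonneg (le_max_right t 0) 3) (sq_nonneg _)

theorem smoothPosPart_le (hδ : 0 < δ) (t : ℝ) : smoothPosPart δ t ≤ max t 0 := by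
  have ht : 0 ≤ max t 0 := le_max_right _ _
  rw [smoothPosPart, div_le_iff₀ (by positivity)]
  nlinarith [mul_nonneg ht ht, mul_nonneg ht hδ.le, mul_nonneg (mul_nonneg ht ht) hδ.le,
    mul_nonneg ht (sq_nonneg δ)]

theorem le_smoothPosPart_add (hδ : 0 < δ) (t : ℝ) : t ≤ smoothPosPart δ t + 2 * δ := by
  have ht : 0 ≤ max t 0 := le_max_right _ _
  refine (le_max_left t 0).trans (sub_le_iff_le_add.mp ?_)
  rw [smoothPosPart, le_div_iff₀ (by positivity)]
  nlinarith [mul_nonneg ht (sq_nonneg δ), pow_pos hδ 3]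

end Truncation

section Kernels

variable {N : ℕ}

/-- The radial weight `η(y) = 4(1 - |y|²)₊` of the mean value formulas. -/
def meanKernel (y : 𝔼[N]) : ℝ := 4 * max (1 - ‖y‖ ^ 2) 0

/-- The radial weight `ψ(y) = (1 - |y|²)₊²`, chosen so that `∇ψ(y) = -η(y) y` with
`η = meanKernel`. -/
def greenKernel (y : 𝔼[N]) : ℝ := max (1 - ‖y‖ ^ 2) 0 ^ 2

/-- The total mass of `meanKernel` on `ℝ^N`. -/
def kernelMass (N : ℕ) : ℝ := ∫ y : 𝔼[N], meanKernel y

theorem meanKernel_nonneg (y : 𝔼[N]) : 0 ≤ meanKernel y := by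
  unfold meanKernel; positivity

theorem greenKernel_nonneg (y : 𝔼[N]) : 0 ≤ greenKernel y := sq_nonneg _

theorem max_one_sub_norm_sq_le_one (y : 𝔼[N]) : max (1 - ‖y‖ ^ 2) 0 ≤ 1 :=
  max_le (sub_le_self 1 (sq_nonneg ‖y‖)) zero_le_one

theorem meanKernel_le_four (y : 𝔼[N]) : meanKernel y ≤ 4 := by
  rw [meanKernel]
  linarith [max_one_sub_norm_sq_le_one y]

theorem greenKernel_le_one (y : 𝔼[N]) : greenKernel y ≤ 1 :=
  pow_le_one₀ (le_max_right _ _) (max_one_sub_norm_sq_le_one y)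

theorem meanKernel_eq_zero {y : 𝔼[N]} (hy : y ∉ ball 0 1) : meanKernel y = 0 := by
  rw [mem_ball_zero_iff, not_lt] at hy
  rw [meanKernel, max_eq_right (by nlinarith), mul_zero]

theorem greenKernel_eq_zero {y : 𝔼[N]} (hy : y ∉ ball 0 1) : greenKernel y = 0 := by
  rw [mem_ball_zero_iff, not_lt] at hy
  rw [greenKernel, max_eq_right (by nlinarith), zero_pow two_ne_zero]

theorem continuous_meanKernel : Continuous (meanKernel (N := N)) := by
  unfold meanKernel; fun_prop

theorem hasCompactSupport_meanKernel : HasCompactSupport (meanKernel (N := N)) :=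
  .intro (isCompact_closedBall 0 1) fun _ hy => meanKernel_eq_zero (notMem_subset
    ball_subset_closedBall hy)

theorem hasCompactSupport_greenKernel : HasCompactSupport (greenKernel (N := N)) :=
  .intro (isCompact_closedBall 0 1) fun _ hy => greenKernel_eq_zero (notMem_subset
    ball_subset_closedBall hy)

theorem hasFDerivAt_greenKernel (y : 𝔼[N]) :
    HasFDerivAt greenKernel (-meanKernel y • innerSL ℝ y) y := by
  have houter : HasDerivAt (fun s : ℝ => max s 0 ^ 2) (2 * max (1 - ‖y‖ ^ 2) 0) (1 - ‖y‖ ^ 2) :=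
    hasDerivAt_comp_max_zero (g := (· ^ 2)) (g' := (2 * ·))
      (fun s _ => by simpa using hasDerivAt_pow 2 s) (by simp) _
  refine (houter.comp_hasFDerivAt y
    ((hasStrictFDerivAt_norm_sq y).hasFDerivAt.const_sub 1)).congr_fderiv ?_
  ext v
  simp [meanKernel]
  ring

theorem contDiff_greenKernel : ContDiff ℝ 1 (greenKernel (N := N)) := by
  refine contDiff_one_iff_fderiv.mpr ⟨fun y => (hasFDerivAt_greenKernel y).differentiableAt, ?_⟩
  have := continuous_meanKernel (N := N)
  rw [funext fun y => (hasFDerivAt_greenKernel y).fderiv]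
  fun_prop

theorem partialDeriv_greenKernel (i : Fin N) (y : 𝔼[N]) :
    partialDeriv i greenKernel y = -(meanKernel y * y i) := by
  rw [partialDeriv, (hasFDerivAt_greenKernel y).fderiv]
  simp [EuclideanSpace.inner_single_right]

theorem kernelMass_pos (N : ℕ) : 0 < kernelMass N :=
  continuous_meanKernel.integral_pos_of_hasCompactSupport_nonneg_nonzero
    hasCompactSupport_meanKernel meanKernel_nonneg (x := 0) (by simp [meanKernel])

end Kernels

section MeanValue

variable {N : ℕ} {F k : 𝔼[N] → ℝ} {x : 𝔼[N]} {R : ℝ}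

theorem integrableOn_ball_of_continuous (hF : Continuous F) (x : 𝔼[N]) (R : ℝ) :
    IntegrableOn F (ball x R) :=
  (hF.continuousOn.integrableOn_compact (isCompact_closedBall x R)).mono_set ball_subset_closedBall

theorem continuous_integral_comp_add_smul_mul (hF : Continuous F) (hFc : HasCompactSupport F)
    (hk : Continuous k) (hkc : HasCompactSupport k) (x : 𝔼[N]) :
    Continuous fun r : ℝ => ∫ y, F (x + r • y) * k y := by
  obtain ⟨C, hC⟩ := hFc.exists_bound_of_continuous hF
  refine continuous_of_dominated (bound := fun y => C * ‖k y‖)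
    (fun r => Continuous.aestronglyMeasurable (by fun_prop)) (fun r => .of_forall fun y => ?_)
    ((hk.integrable_of_hasCompactSupport hkc).norm.const_mul C)
    (.of_forall fun y => by fun_prop)
  rw [norm_mul]
  exact mul_le_mul_of_nonneg_right (hC _) (norm_nonneg _)

theorem hasDerivAt_integral_comp_add_smul_mul (hF : ContDiff ℝ 1 F) (hFc : HasCompactSupport F)
    (hk : Continuous k) (hkc : HasCompactSupport k) (x : 𝔼[N]) (r : ℝ) :
    HasDerivAt (fun r : ℝ => ∫ y, F (x + r • y) * k y)
      (∫ y, fderiv ℝ F (x + r • y) y * k y) r := by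
  have hF' : Continuous (fderiv ℝ F) := hF.continuous_fderiv (by norm_num)
  obtain ⟨C, hC⟩ := (hFc.fderiv (𝕜 := ℝ)).exists_bound_of_continuous hF'
  refine (hasDerivAt_integral_of_dominated_loc_of_deriv_le (μ := volume) (s := univ)
    (F := fun (s : ℝ) y => F (x + s • y) * k y)
    (F' := fun (s : ℝ) y => fderiv ℝ F (x + s • y) y * k y) (bound := fun y => C * ‖y‖ * ‖k y‖)
    univ_mem (.of_forall fun s => Continuous.aestronglyMeasurable ?_) ?_
    (Continuous.aestronglyMeasurable ?_) (.of_forall fun y s _ => ?_) ?_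
    (.of_forall fun y s _ => ?_)).2
  · have := hF.continuous
    fun_prop
  · have := hF.continuous
    exact Continuous.integrable_of_hasCompactSupport (by fun_prop) hkc.mul_left
  · exact ((hF'.comp (by fun_prop)).clm_apply continuous_id).mul hk
  · rw [norm_mul]
    gcongr
    exact (fderiv ℝ F (x + s • y)).le_of_opNorm_le (hC _) y
  · exact Continuous.integrable_of_hasCompactSupport (by fun_prop) hkc.norm.mul_left
  · have hline : HasDerivAt (fun s : ℝ => x + s • y) y s := by
      simpa using ((hasDerivAt_id s).smul_const y).const_add x
    exact ((hF.differentiable (by norm_num) _).hasFDerivAt.comp_hasDerivAt s hline).mul_const _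

theorem integral_fderiv_apply_mul_meanKernel (hF : ContDiff ℝ 2 F) (x : 𝔼[N]) (r : ℝ) :
    ∫ y, fderiv ℝ F (x + r • y) y * meanKernel y =
      r * ∫ y, lap F (x + r • y) * greenKernel y := by
  have hG : ∀ i, ContDiff ℝ 1 fun y => partialDeriv i F (x + r • y) := fun i =>
    (contDiff_partialDeriv hF (by norm_num) i).comp (by fun_prop)
  calc ∫ y, fderiv ℝ F (x + r • y) y * meanKernel y
      = -∫ y, ∑ i, partialDeriv i F (x + r • y) * partialDeriv i greenKernel y := by
        rw [← integral_neg]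
        congr with y
        rw [fderiv_apply_eq_sum_partialDeriv, Finset.sum_mul, ← Finset.sum_neg_distrib]
        refine Finset.sum_congr rfl fun i _ => ?_
        rw [partialDeriv_greenKernel]
        ring
    _ = ∫ y, (∑ i, partialDeriv i (fun y => partialDeriv i F (x + r • y)) y) * greenKernel y := by
        rw [integral_sum_mul_partialDeriv hG contDiff_greenKernel hasCompactSupport_greenKernel,
          neg_neg]
    _ = r * ∫ y, lap F (x + r • y) * greenKernel y := by
        simp_rw [partialDeriv_comp_add_smul, ← Finset.mul_sum, ← lap_eq_sum_partialDeriv, mul_assoc]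
        rw [integral_const_mul]

theorem kernelMass_mul_eq (hF : ContDiff ℝ 2 F) (hFc : HasCompactSupport F) (x : 𝔼[N]) (R : ℝ) :
    kernelMass N * F x = (∫ y, F (x + R • y) * meanKernel y) -
      ∫ r in 0..R, r * ∫ y, lap F (x + r • y) * greenKernel y := by
  have hderiv := fun r => (integral_fderiv_apply_mul_meanKernel hF x r) ▸
    hasDerivAt_integral_comp_add_smul_mul (hF.of_le (by norm_num)) hFc continuous_meanKernel
      hasCompactSupport_meanKernel x r
  have hcont := continuous_integral_comp_add_smul_mul (continuous_lap hF)
    (hasCompactSupport_lap hFc) contDiff_greenKernel.continuous hasCompactSupport_greenKernel x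
  rw [intervalIntegral.integral_eq_sub_of_hasDerivAt (fun r _ => hderiv r)
    ((continuous_id.mul hcont).intervalIntegrable _ _)]
  simp only [zero_smul, add_zero, integral_const_mul]
  rw [kernelMass]
  ring

theorem add_smul_mem_ball {y : 𝔼[N]} (hR : 0 < R) (hy : y ∈ ball 0 1) : x + R • y ∈ ball x R := by
  rw [mem_ball_zero_iff] at hy
  rw [mem_ball, dist_self_add_left, norm_smul, Real.norm_of_nonneg hR.le]
  nlinarith

theorem integral_comp_add_smul (g : 𝔼[N] → ℝ) (x : 𝔼[N]) (hR : 0 < R) :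
    ∫ y, g (x + R • y) = (R ^ N)⁻¹ * ∫ y, g y := by
  rw [Measure.integral_comp_smul_of_nonneg volume (fun y => g (x + y)) R (hR := hR.le),
    integral_add_left_eq_self]
  simp

theorem setIntegral_comp_add_smul (g : 𝔼[N] → ℝ) (z : 𝔼[N]) (hR : 0 < R) (ρ : ℝ) :
    ∫ y in ball 0 ρ, g (z + R • y) = (R ^ N)⁻¹ * ∫ y in ball z (R * ρ), g y := by
  have hpre : ball (0 : 𝔼[N]) ρ = (fun y => z + R • y) ⁻¹' ball z (R * ρ) := by
    ext y
    rw [mem_preimage, mem_ball_zero_iff, mem_ball, dist_self_add_left, norm_smul,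
      Real.norm_of_nonneg hR.le, mul_lt_mul_iff_right₀ hR]
  rw [← integral_indicator measurableSet_ball, ← integral_indicator measurableSet_ball,
    ← integral_comp_add_smul _ z hR, hpre]
  rfl

theorem integral_comp_mul_meanKernel_le (hF : Continuous F) (hR : 0 < R)
    (hF₀ : ∀ y ∈ ball x R, 0 ≤ F y) :
    ∫ y, F (x + R • y) * meanKernel y ≤ 4 * (R ^ N)⁻¹ * ∫ y in ball x R, F y := by
  have hcomp : Continuous fun y => F (x + R • y) := by fun_prop
  have hsupp : ∀ y ∉ ball (0 : 𝔼[N]) 1, F (x + R • y) * meanKernel y = 0 := fun y hy => by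
    rw [meanKernel_eq_zero hy, mul_zero]
  calc ∫ y, F (x + R • y) * meanKernel y
      = ∫ y in ball 0 1, F (x + R • y) * meanKernel y :=
        (setIntegral_eq_integral_of_forall_compl_eq_zero hsupp).symm
    _ ≤ ∫ y in ball 0 1, 4 * F (x + R • y) := by
        refine setIntegral_mono_on ?_ ?_ measurableSet_ball fun y hy => ?_
        · exact ((hcomp.mul continuous_meanKernel).integrable_of_hasCompactSupport
            hasCompactSupport_meanKernel.mul_left).integrableOn
        · exact integrableOn_ball_of_continuous (hcomp.const_mul 4) 0 1
        · nlinarith [hF₀ _ (add_smul_mem_ball hR hy), meanKernel_le_four y]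
    _ = 4 * (R ^ N)⁻¹ * ∫ y in ball x R, F y := by
        rw [integral_const_mul, setIntegral_comp_add_smul F x hR 1, mul_one, mul_assoc]

theorem kernelMass_mul_le_of_lap_nonneg (hF : ContDiff ℝ 2 F) (hFc : HasCompactSupport F)
    (hR : 0 < R) (hlap : ∀ y ∈ ball x R, 0 ≤ lap F y) (hF₀ : ∀ y ∈ ball x R, 0 ≤ F y) :
    kernelMass N * F x ≤ 4 * (R ^ N)⁻¹ * ∫ y in ball x R, F y := by
  refine le_trans ?_ (integral_comp_mul_meanKernel_le hF.continuous hR hF₀)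
  rw [kernelMass_mul_eq hF hFc x R, sub_le_self_iff]
  rw [intervalIntegral.integral_of_le hR.le]
  refine setIntegral_nonneg measurableSet_Ioc fun r hr =>
    mul_nonneg hr.1.le (integral_nonneg fun y => ?_)
  by_cases hy : y ∈ ball 0 1
  · exact mul_nonneg (hlap _ (ball_subset_ball hr.2 (add_smul_mem_ball hr.1 hy)))
      (greenKernel_nonneg y)
  · simp [greenKernel_eq_zero hy]

theorem kernelMass_mul_smoothPosPart_le {δ : ℝ} (hδ : 0 < δ) (hF : ContDiff ℝ 2 F)
    (hFc : HasCompactSupport F) (hR : 0 < R) (hlap : ∀ y ∈ ball x R, 0 ≤ F y → 0 ≤ lap F y) :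
    kernelMass N * smoothPosPart δ (F x) ≤
      4 * (R ^ N)⁻¹ * ∫ y in ball x R, smoothPosPart δ (F y) := by
  refine kernelMass_mul_le_of_lap_nonneg (F := fun y => smoothPosPart δ (F y))
    ((contDiff_smoothPosPart hδ).comp hF)
    (hFc.comp_left (g := smoothPosPart δ) (by simp [smoothPosPart])) hR (fun y hy => ?_)
    fun y _ => smoothPosPart_nonneg δ _
  rw [lap_comp (.of_forall (hasDerivAt_smoothPosPart hδ)) (hasDerivAt_smoothPosPartDeriv hδ _)
    hF.contDiffAt]
  refine add_nonneg ?_ (by unfold smoothPosPartDeriv₂; positivity)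
  rcases le_total 0 (F y) with hFy | hFy
  · exact mul_nonneg (by unfold smoothPosPartDeriv; positivity) (hlap y hy hFy)
  · simp [smoothPosPartDeriv, max_eq_right hFy]

theorem kernelMass_mul_le_setIntegral_max (hF : ContDiff ℝ 2 F)
    (hFc : HasCompactSupport F) (hR : 0 < R) (hlap : ∀ y ∈ ball x R, 0 ≤ F y → 0 ≤ lap F y) :
    kernelMass N * F x ≤ 4 * (R ^ N)⁻¹ * ∫ y in ball x R, max (F y) 0 := by
  have hF₀ : Continuous F := hF.continuous
  have happrox : ∀ δ > 0, kernelMass N * (F x - 2 * δ) ≤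
      4 * (R ^ N)⁻¹ * ∫ y in ball x R, max (F y) 0 := fun δ hδ => by
    calc kernelMass N * (F x - 2 * δ) ≤ kernelMass N * smoothPosPart δ (F x) :=
          mul_le_mul_of_nonneg_left (sub_le_iff_le_add.mpr (le_smoothPosPart_add hδ _))
            (kernelMass_pos N).le
      _ ≤ 4 * (R ^ N)⁻¹ * ∫ y in ball x R, smoothPosPart δ (F y) :=
          kernelMass_mul_smoothPosPart_le hδ hF hFc hR hlap
      _ ≤ 4 * (R ^ N)⁻¹ * ∫ y in ball x R, max (F y) 0 :=
          mul_le_mul_of_nonneg_left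
            (integral_mono
              (integrableOn_ball_of_continuous
                ((contDiff_smoothPosPart hδ).continuous.comp hF₀) x R)
              (integrableOn_ball_of_continuous (by fun_prop) x R) fun y => smoothPosPart_le hδ _)
            (by positivity)
  have hlim : Tendsto (fun δ : ℝ => kernelMass N * (F x - 2 * δ)) (𝓝[>] 0)
      (𝓝 (kernelMass N * (F x - 2 * 0))) :=
    (Continuous.tendsto (by fun_prop) 0).mono_left nhdsWithin_le_nhds
  rw [mul_zero, sub_zero] at hlim
  exact le_of_tendsto hlim (eventually_mem_nhdsWithin.mono happrox)

theorem kernelMass_mul_le_setIntegral_max_of_contDiffOn {ρ : ℝ} (hR : 0 < R) (hRρ : R < ρ)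
    (hF : ContDiffOn ℝ 2 F (ball x ρ)) (hlap : ∀ y ∈ ball x R, 0 ≤ F y → 0 ≤ lap F y) :
    kernelMass N * F x ≤ 4 * (R ^ N)⁻¹ * ∫ y in ball x R, max (F y) 0 := by
  obtain ⟨r, hRr, hrρ⟩ := exists_between hRρ
  let χ : ContDiffBump x := ⟨R, r, hR, hRr⟩
  have hχ : ∀ y ∈ ball x R, χ y * F y = F y := fun y hy => by
    rw [χ.one_of_mem_closedBall (ball_subset_closedBall hy), one_mul]
  have hχF : ContDiff ℝ 2 fun y => χ y * F y :=
    contDiff_mul_of_tsupport_subset isOpen_ball χ.contDiff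
      (χ.tsupport_eq.trans_subset (closedBall_subset_ball hrρ)) hF
  have hmean := kernelMass_mul_le_setIntegral_max hχF χ.hasCompactSupport.mul_right hR
    fun y hy hy₀ => by
      rw [lap_congr (eventually_of_mem (isOpen_ball.mem_nhds hy) hχ)]
      exact hlap y hy (hχ y hy ▸ hy₀)
  rw [hχ x (mem_ball_self hR)] at hmean
  refine hmean.trans_eq (congrArg _ (setIntegral_congr_fun measurableSet_ball fun y hy => ?_))
  simp only [hχ y hy]

theorem ofReal_integral_le_lintegral_ofReal {α : Type*} [MeasurableSpace α] {μ : Measure α}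
    (f : α → ℝ) : ENNReal.ofReal (∫ a, f a ∂μ) ≤ ∫⁻ a, ENNReal.ofReal (f a) ∂μ := by
  by_cases hf : Integrable f μ
  · rw [integral_eq_lintegral_pos_part_sub_lintegral_neg_part hf]
    exact (ENNReal.ofReal_le_ofReal (sub_le_self _ ENNReal.toReal_nonneg)).trans
      ENNReal.ofReal_toReal_le
  · simp [integral_undef hf]

/-- The integral `∫_0^R ∫_{B_1} f(x + r y) dy dr`, which controls the part of a function that its
Laplacian contributes to the mean value formula. It is an extended nonnegative number, so that
neither measurability nor integrability is needed to write it down. -/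
def radialPotential (R : ℝ) (f : 𝔼[N] → ENNReal) (x : 𝔼[N]) : ENNReal :=
  ∫⁻ r in Ioc 0 R, ∫⁻ y in ball 0 1, f (x + r • y)

theorem radialPotential_mono {f g : 𝔼[N] → ENNReal} (hfg : ∀ y ∈ ball x R, f y ≤ g y) :
    radialPotential R f x ≤ radialPotential R g x :=
  setLIntegral_mono' measurableSet_Ioc fun _ hr => setLIntegral_mono' measurableSet_ball
    fun _ hy => hfg _ (ball_subset_ball hr.2 (add_smul_mem_ball hr.1 hy))

theorem radialPotential_const_add_le (hR : R ≤ 1) (a : ENNReal) (f : 𝔼[N] → ENNReal) :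
    radialPotential R (fun y => a + f y) x ≤
      a * volume (ball (0 : 𝔼[N]) 1) + radialPotential R f x := by
  simp_rw [radialPotential, lintegral_add_left measurable_const, setLIntegral_const]
  rw [Real.volume_Ioc, sub_zero]
  exact add_le_add_left (mul_le_of_le_one_right' (ENNReal.ofReal_le_one.mpr hR)) _

theorem measurable_radialPotential_integrand {f : 𝔼[N] → ENNReal} (hf : Measurable f) :
    Measurable fun q : 𝔼[N] × ℝ => ∫⁻ y in ball 0 1, f (q.1 + q.2 • y) :=
  Measurable.lintegral_prod_right'
    (f := fun q : (𝔼[N] × ℝ) × 𝔼[N] => f (q.1.1 + q.1.2 • q.2)) (by fun_prop)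

theorem measurable_radialPotential {f : 𝔼[N] → ENNReal} (hf : Measurable f) (R : ℝ) :
    Measurable (radialPotential R f) :=
  (measurable_radialPotential_integrand hf).lintegral_prod_right'

theorem lintegral_radialPotential_le {f : 𝔼[N] → ENNReal} (hf : Measurable f) (hR : R ≤ 1) :
    ∫⁻ x, radialPotential R f x ≤ volume (ball (0 : 𝔼[N]) 1) * ∫⁻ x, f x := by
  have hslice : ∀ r : ℝ, ∫⁻ x, ∫⁻ y in ball (0 : 𝔼[N]) 1, f (x + r • y) =
      volume (ball (0 : 𝔼[N]) 1) * ∫⁻ x, f x := fun r => by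
    rw [lintegral_lintegral_swap (Measurable.aemeasurable (by fun_prop))]
    simp_rw [lintegral_add_right_eq_self f]
    rw [setLIntegral_const, mul_comm]
  unfold radialPotential
  rw [lintegral_lintegral_swap (measurable_radialPotential_integrand hf).aemeasurable]
  simp_rw [hslice]
  rw [setLIntegral_const, Real.volume_Ioc, sub_zero]
  exact mul_le_of_le_one_right' (ENNReal.ofReal_le_one.mpr hR)

theorem ofReal_kernelMass_mul_le (hF : ContDiff ℝ 2 F) (hFc : HasCompactSupport F) (hR : 0 ≤ R)
    (hR₁ : R ≤ 1) :
    ENNReal.ofReal (kernelMass N * F x) ≤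
      ENNReal.ofReal (∫ y, F (x + R • y) * meanKernel y) +
        radialPotential R (fun y => ENNReal.ofReal (-lap F y)) x := by
  rw [kernelMass_mul_eq hF hFc x R, intervalIntegral.integral_of_le hR, sub_eq_add_neg,
    ← integral_neg]
  refine ENNReal.ofReal_add_le.trans (add_le_add_right ?_ _)
  refine (ofReal_integral_le_lintegral_ofReal _).trans
    (setLIntegral_mono' measurableSet_Ioc fun r hr => ?_)
  rw [← integral_const_mul, ← integral_neg, ← lintegral_indicator measurableSet_ball]
  refine (ofReal_integral_le_lintegral_ofReal _).trans (lintegral_mono fun y => ?_)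
  by_cases hy : y ∈ ball 0 1
  · have hweight : r * greenKernel y ≤ 1 :=
      mul_le_one₀ (hr.2.trans hR₁) (greenKernel_nonneg y) (greenKernel_le_one y)
    rw [indicator_of_mem hy, show -(r * (lap F (x + r • y) * greenKernel y)) =
      r * greenKernel y * -lap F (x + r • y) by ring,
      ENNReal.ofReal_mul (mul_nonneg hr.1.le (greenKernel_nonneg y))]
    exact mul_le_of_le_one_left' (ENNReal.ofReal_le_one.mpr hweight)
  · simp [greenKernel_eq_zero hy]

end MeanValue

/-! ### Stability -/

section Stability

open scoped Convolution

variable {N : ℕ} {ι : Type*} {l : Filter ι}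

theorem tendstoUniformly_normed_convolution {E : Type*} [NormedAddCommGroup E] [NormedSpace ℝ E]
    [CompleteSpace E] {b : ι → ContDiffBump (0 : 𝔼[N])} {g : 𝔼[N] → E}
    (hb : Tendsto (fun i => (b i).rOut) l (𝓝 0)) (hg : UniformContinuous g) :
    TendstoUniformly (fun i => (b i).normed volume ⋆[.lsmul ℝ ℝ, volume] g) g l := by
  refine Metric.tendstoUniformly_iff.mpr fun ε hε => ?_
  obtain ⟨δ, hδ, hgδ⟩ := Metric.uniformContinuous_iff.mp hg (ε / 2) (half_pos hε)
  filter_upwards [hb.eventually_lt_const hδ] with i hi x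
  rw [dist_comm]
  refine ((b i).dist_normed_convolution_le hg.continuous.aestronglyMeasurable
    fun y hy => (hgδ ?_).le).trans_lt (half_lt_self hε)
  exact (mem_ball.mp hy).trans hi

theorem fderiv_normed_convolution (b : ContDiffBump (0 : 𝔼[N])) {φ : 𝔼[N] → ℝ}
    (hφ : ContDiff ℝ 1 φ) (hφc : HasCompactSupport φ) :
    fderiv ℝ (b.normed volume ⋆[.lsmul ℝ ℝ, volume] φ) =
      b.normed volume ⋆[.lsmul ℝ ℝ, volume] fderiv ℝ φ := by
  ext1 x
  exact (hφc.hasFDerivAt_convolution_right (.lsmul ℝ ℝ)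
    b.continuous_normed.locallyIntegrable hφ x).fderiv

theorem tsupport_normed_convolution_subset (b : ContDiffBump (0 : 𝔼[N])) (φ : 𝔼[N] → ℝ) :
    tsupport (b.normed volume ⋆[.lsmul ℝ ℝ, volume] φ) ⊆ cthickening b.rOut (tsupport φ) := by
  refine (closure_mono ((support_convolution_subset _).trans ?_)).trans
    (closure_thickening_subset_cthickening _ _)
  rw [b.support_normed_eq, ball_add_zero]
  exact thickening_subset_of_subset _ (subset_tsupport φ)

theorem exists_seq_contDiff_tendstoUniformly {Ω : Set 𝔼[N]} (hΩ : IsOpen Ω) {φ : 𝔼[N] → ℝ}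
    (hφ : ContDiff ℝ 1 φ) (hφc : HasCompactSupport φ) (hφΩ : tsupport φ ⊆ Ω) :
    ∃ K ⊆ Ω, IsCompact K ∧ tsupport φ ⊆ K ∧ ∃ ψ : ℕ → 𝔼[N] → ℝ,
      (∀ n, ContDiff ℝ (⊤ : ℕ∞) (ψ n)) ∧ (∀ n, tsupport (ψ n) ⊆ K) ∧
      TendstoUniformly ψ φ atTop ∧
      TendstoUniformly (fun n => fderiv ℝ (ψ n)) (fderiv ℝ φ) atTop := by
  obtain ⟨δ, hδ, hδΩ⟩ := hφc.isCompact.exists_cthickening_subset_open hΩ hφΩ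
  have hr : ∀ n : ℕ, 0 < δ * (1 / (n + 1)) := fun n => by positivity
  let b : ℕ → ContDiffBump (0 : 𝔼[N]) := fun n =>
    ⟨δ * (1 / (n + 1)) / 2, δ * (1 / (n + 1)), half_pos (hr n), half_lt_self (hr n)⟩
  have hb : Tendsto (fun n => (b n).rOut) atTop (𝓝 0) := by
    simpa only [mul_zero] using tendsto_one_div_add_atTop_nhds_zero_nat.const_mul δ
  have hbδ : ∀ n, (b n).rOut ≤ δ := fun n =>
    mul_le_of_le_one_right hδ.le (div_le_self zero_le_one (by simp))
  refine ⟨cthickening δ (tsupport φ), hδΩ, hφc.isCompact.cthickening, self_subset_cthickening _,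
    fun n => (b n).normed volume ⋆[.lsmul ℝ ℝ, volume] φ, fun n => ?_, fun n => ?_, ?_, ?_⟩
  · exact (b n).hasCompactSupport_normed.contDiff_convolution_left _ (b n).contDiff_normed
      hφ.continuous.locallyIntegrable
  · exact (tsupport_normed_convolution_subset _ _).trans (cthickening_mono (hbδ n) _)
  · exact tendstoUniformly_normed_convolution hb (hφc.uniformContinuous_of_continuous hφ.continuous)
  · simp_rw [fderiv_normed_convolution _ hφ hφc]
    exact tendstoUniformly_normed_convolution hb
      ((hφc.fderiv ℝ).uniformContinuous_of_continuous (hφ.continuous_fderiv one_ne_zero))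

theorem tendsto_setIntegral_mul_sq [l.IsCountablyGenerated] {K : Set 𝔼[N]} (hK : IsCompact K)
    {W g : 𝔼[N] → ℝ} {G : ι → 𝔼[N] → ℝ} (hW : ContinuousOn W K) (hg : Continuous g)
    (hG : ∀ i, Continuous (G i)) (hGg : TendstoUniformly G g l) :
    Tendsto (fun i => ∫ x in K, W x * G i x ^ 2) l (𝓝 (∫ x in K, W x * g x ^ 2)) := by
  refine tendsto_integral_filter_of_dominated_convergence
    (fun x => ‖W x‖ * (‖g x‖ + 1) ^ 2) (.of_forall fun i => ?_) ?_ ?_ ?_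
  · exact (hW.mul ((hG i).pow 2).continuousOn).aestronglyMeasurable hK.measurableSet
  · filter_upwards [Metric.tendstoUniformly_iff.mp hGg 1 one_pos] with i hi
    refine .of_forall fun x => ?_
    have hGx : ‖G i x‖ ≤ ‖g x‖ + 1 := by
      have := norm_le_norm_add_norm_sub' (G i x) (g x)
      rw [← dist_eq_norm, dist_comm] at this
      linarith [hi x]
    rw [norm_mul, norm_pow]
    gcongr
  · exact (hW.norm.mul (by fun_prop)).integrableOn_compact hK
  · exact .of_forall fun x => ((hGg.tendsto_at x).pow 2).const_mul _

theorem IsStable.le_of_contDiff {Ω : Set 𝔼[N]} {lam gam p θ : ℝ} {u v φ : 𝔼[N] → ℝ}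
    (hstable : IsStable Ω lam gam p θ u v) (hΩ : IsOpen Ω) (hu : ContinuousOn u Ω)
    (hv : ContinuousOn v Ω) (hu₀ : ∀ x ∈ Ω, 0 < u x) (hv₀ : ∀ x ∈ Ω, 0 < v x)
    (hφ : ContDiff ℝ 1 φ) (hφc : HasCompactSupport φ) (hφΩ : tsupport φ ⊆ Ω) :
    √(lam * gam * p * θ) *
        ∫ x in Ω, (v x + 1) ^ ((p - 1) / 2) * (u x + 1) ^ ((θ - 1) / 2) * φ x ^ 2
      ≤ ∫ x in Ω, ‖gradient φ x‖ ^ 2 := by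
  obtain ⟨K, hKΩ, hK, hφK, ψ, hψ, hψK, hlim, hlim'⟩ :=
    exists_seq_contDiff_tendstoUniformly hΩ hφ hφc hφΩ
  have hW : ContinuousOn (fun x => (v x + 1) ^ ((p - 1) / 2) * (u x + 1) ^ ((θ - 1) / 2)) K :=
    .mono (.mul ((hv.add continuousOn_const).rpow_const fun x hx =>
        .inl (add_pos (hv₀ x hx) one_pos).ne')
      ((hu.add continuousOn_const).rpow_const fun x hx =>
        .inl (add_pos (hu₀ x hx) one_pos).ne')) hKΩ
  have hrestrict : ∀ {h : 𝔼[N] → ℝ}, (∀ x ∉ K, h x = 0) → ∫ x in Ω, h x = ∫ x in K, h x :=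
    fun hh => setIntegral_eq_of_subset_of_forall_sdiff_eq_zero hΩ.measurableSet hKΩ
      fun x hx => hh x hx.2
  have hweight : ∀ {χ : 𝔼[N] → ℝ} (W : 𝔼[N] → ℝ), tsupport χ ⊆ K →
      ∫ x in Ω, W x * χ x ^ 2 = ∫ x in K, W x * χ x ^ 2 := fun W hχ => hrestrict fun x hx => by
    simp [image_eq_zero_of_notMem_tsupport fun h => hx (hχ h)]
  have henergy : ∀ {χ : 𝔼[N] → ℝ}, tsupport χ ⊆ K →
      ∫ x in Ω, ‖gradient χ x‖ ^ 2 = ∫ x in K, 1 * ‖fderiv ℝ χ x‖ ^ 2 := fun hχ => by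
    simp_rw [one_mul, ← norm_gradient]
    exact hrestrict fun x hx => by
      simp [gradient_eq_zero_of_notMem_tsupport fun h => hx (hχ h)]
  have hψ₁ : ∀ n, ContDiff ℝ 1 (ψ n) := fun n => (hψ n).of_le (mod_cast le_top)
  have hmass := tendsto_setIntegral_mul_sq hK hW hφ.continuous (fun n => (hψ n).continuous) hlim
  have hgrad := tendsto_setIntegral_mul_sq hK (continuousOn_const (c := 1))
    (hφ.continuous_fderiv one_ne_zero).norm (fun n => ((hψ₁ n).continuous_fderiv one_ne_zero).norm)
    (uniformContinuous_norm.comp_tendstoUniformly hlim')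
  rw [hweight _ hφK, henergy hφK]
  refine le_of_tendsto_of_tendsto' (hmass.const_mul _) hgrad fun n => ?_
  have := hstable (ψ n) ⟨hψ n, hK.of_isClosed_subset (isClosed_tsupport _) (hψK n),
    (hψK n).trans hKΩ⟩
  rwa [hweight _ (hψK n), henergy (hψK n)] at this

end Stability

/-! ### The Sobolev inequality on sets of small measure -/

section Sobolev

variable {N : ℕ}

theorem eLpNorm_two_sq_eq {α E : Type*} [MeasurableSpace α] {μ : Measure α}
    [NormedAddCommGroup E] {f : α → E} (hf : MemLp f 2 μ) :
    eLpNorm f 2 μ ^ 2 = ENNReal.ofReal (∫ x, ‖f x‖ ^ 2 ∂μ) := by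
  have hnonneg : 0 ≤ ∫ x, ‖f x‖ ^ 2 ∂μ := by positivity
  rw [hf.eLpNorm_eq_integral_rpow_norm two_ne_zero ENNReal.ofNat_ne_top,
    ← ENNReal.ofReal_pow (by positivity)]
  simp only [ENNReal.toReal_ofNat, Real.rpow_ofNat, ← Real.sqrt_eq_rpow, ← one_div,
    Real.sq_sqrt hnonneg]

/-- The constant in `setIntegral_sq_le`: the square of the constant of the Gagliardo–Nirenberg–
Sobolev inequality for the exponent `2` on `ℝ^N`. -/
def sobolevConst (N : ℕ) : ℝ :=
  eLpNormLESNormFDerivOfEqInnerConst (volume : Measure 𝔼[N]) 2 ^ 2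

theorem sobolevConst_nonneg (N : ℕ) : 0 ≤ sobolevConst N := by unfold sobolevConst; positivity

theorem eLpNorm_restrict_le_mul_eLpNorm_fderiv (hN : 3 ≤ N) {φ : 𝔼[N] → ℝ} (hφ : ContDiff ℝ 1 φ)
    (hφc : HasCompactSupport φ) (S : Set 𝔼[N]) :
    eLpNorm φ 2 (volume.restrict S) ≤
      eLpNormLESNormFDerivOfEqInnerConst (volume : Measure 𝔼[N]) 2 *
        eLpNorm (fderiv ℝ φ) 2 volume * volume S ^ (1 / N : ℝ) := by
  have hN₀ : (3 : ℝ) ≤ N := mod_cast hN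
  have hq : ((2 * N / (N - 2) : ℝ).toNNReal : ℝ) = 2 * N / (N - 2) :=
    Real.coe_toNNReal _ (div_nonneg (by linarith) (by linarith))
  set q : NNReal := (2 * N / (N - 2) : ℝ).toNNReal
  have hqinv : (q : ℝ)⁻¹ = 1 / 2 - 1 / N := by
    have : (N : ℝ) - 2 ≠ 0 := by linarith
    rw [hq]
    field_simp
  have h2q : (2 : ENNReal) ≤ q := by
    rw [← ENNReal.coe_ofNat, ENNReal.coe_le_coe, ← NNReal.coe_le_coe, hq, NNReal.coe_ofNat,
      le_div_iff₀ (by linarith)]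
    linarith
  have hhoelder := eLpNorm_le_eLpNorm_mul_rpow_measure_univ (μ := volume.restrict S) h2q
    hφ.continuous.aestronglyMeasurable
  rw [show 1 / (2 : ENNReal).toReal - 1 / (q : ENNReal).toReal = 1 / N by
    rw [ENNReal.coe_toReal, one_div (q : ℝ), hqinv, ENNReal.toReal_ofNat, sub_sub_cancel],
    Measure.restrict_apply_univ] at hhoelder
  refine hhoelder.trans (mul_le_mul_left ((eLpNorm_restrict_le _ _ _ _).trans ?_) _)
  exact eLpNorm_le_eLpNorm_fderiv_of_eq_inner volume hφ hφc (p := 2) one_le_two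
    (by rw [finrank_euclideanSpace_fin]; omega)
    (by simp [hqinv])

theorem setIntegral_sq_le (hN : 3 ≤ N) {φ : 𝔼[N] → ℝ} (hφ : ContDiff ℝ 1 φ)
    (hφc : HasCompactSupport φ) {S : Set 𝔼[N]} (hS : volume S ≠ ⊤) :
    ∫ x in S, φ x ^ 2 ≤
      sobolevConst N * volume.real S ^ (2 / N : ℝ) * ∫ x, ‖gradient φ x‖ ^ 2 := by
  have hsq := pow_le_pow_left' (eLpNorm_restrict_le_mul_eLpNorm_fderiv hN hφ hφc S) 2
  have hpow : (volume S ^ (1 / N : ℝ)) ^ 2 = ENNReal.ofReal (volume.real S ^ (2 / N : ℝ)) := by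
    rw [← ENNReal.rpow_natCast, ← ENNReal.rpow_mul, measureReal_def, ENNReal.toReal_rpow,
      ENNReal.ofReal_toReal (ENNReal.rpow_ne_top_of_nonneg (by positivity) hS)]
    ring_nf
  rw [mul_pow, mul_pow, hpow,
    eLpNorm_two_sq_eq ((hφ.continuous.memLp_of_hasCompactSupport hφc).restrict _),
    eLpNorm_two_sq_eq ((hφ.continuous_fderiv one_ne_zero).memLp_of_hasCompactSupport
      (hφc.fderiv ℝ)), ← ENNReal.ofReal_coe_nnreal, ← ENNReal.ofReal_pow NNReal.zero_le_coe,
    ← ENNReal.ofReal_mul (by positivity), ← ENNReal.ofReal_mul (by positivity),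
    ENNReal.ofReal_le_ofReal_iff (by positivity)] at hsq
  simp_rw [← norm_gradient, Real.norm_eq_abs, sq_abs] at hsq
  exact hsq.trans_eq (mul_right_comm _ _ _)

end Sobolev

/-! ### Normalized solutions -/

theorem setIntegral_le_of_setIntegral_rpow_le {α : Type*} [MeasurableSpace α] {μ : Measure α}
    {s : Set α} {f : α → ℝ} {θ δ C : ℝ} (hs : MeasurableSet s) (hμs : μ s ≠ ⊤) (hθ : 1 ≤ θ)
    (hδ : 0 < δ) (hf₀ : ∀ x ∈ s, 0 ≤ f x) (hf : IntegrableOn f s μ)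
    (hfθ : IntegrableOn (fun x => f x ^ θ) s μ) (hle : ∫ x in s, f x ^ θ ∂μ ≤ C * δ ^ θ) :
    ∫ x in s, f x ∂μ ≤ (μ.real s + C) * δ := by
  have hpoint : ∀ x ∈ s, f x ≤ δ + δ ^ (1 - θ) * f x ^ θ := fun x hx => by
    rcases le_or_gt (f x) δ with hfx | hfx
    · have := hf₀ x hx
      exact hfx.trans (le_add_of_nonneg_right (by positivity))
    · have hfx₀ : 0 < f x := hδ.trans hfx
      have hone : 1 ≤ δ ^ (1 - θ) * f x ^ (θ - 1) := by
        rw [← neg_sub θ 1, rpow_neg hδ.le, ← div_eq_inv_mul, one_le_div (by positivity)]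
        exact rpow_le_rpow hδ.le hfx.le (by linarith)
      calc f x ≤ δ ^ (1 - θ) * f x ^ (θ - 1) * f x := le_mul_of_one_le_left hfx₀.le hone
        _ = δ ^ (1 - θ) * f x ^ θ := by rw [mul_assoc, ← rpow_add_one hfx₀.ne', sub_add_cancel]
        _ ≤ δ + δ ^ (1 - θ) * f x ^ θ := le_add_of_nonneg_left hδ.le
  have hconst : IntegrableOn (fun _ => δ) s μ := integrableOn_const hμs
  calc ∫ x in s, f x ∂μ ≤ ∫ x in s, (δ + δ ^ (1 - θ) * f x ^ θ) ∂μ :=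
        setIntegral_mono_on hf (hconst.add (hfθ.const_mul _)) hs hpoint
    _ = μ.real s * δ + δ ^ (1 - θ) * ∫ x in s, f x ^ θ ∂μ := by
        rw [integral_add hconst (hfθ.const_mul _), integral_const_mul,
          setIntegral_const, smul_eq_mul]
    _ ≤ μ.real s * δ + δ ^ (1 - θ) * (C * δ ^ θ) := by gcongr
    _ = (μ.real s + C) * δ := by
        rw [mul_left_comm, ← rpow_add hδ, sub_add_cancel, rpow_one, add_mul]

section Normalized

/-- The volume of the unit ball of `ℝ^N`. -/
def unitBallVolume (N : ℕ) : ℝ := volume.real (ball (0 : 𝔼[N]) 1)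

theorem unitBallVolume_nonneg (N : ℕ) : 0 ≤ unitBallVolume N := measureReal_nonneg

/-- `(U, V)` solves `-ΔU = λ V^p`, `-ΔV = γ U^θ` in the unit ball, is positive and stable there, and
`V` has `L²` norm at most `m`. Rescaling the unknowns `u + 1`, `v + 1` of the original system from
a ball to the unit ball yields such a pair. The functions are extended to `ℝ^N` as `C²` functions,
so that the calculus on the whole space applies, and the test functions are only `C¹`. -/
structure IsNormalizedSolution {N : ℕ} (lam gam p θ m : ℝ) (U V : 𝔼[N] → ℝ) : Prop where
  contDiff_left : ContDiff ℝ 2 U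
  contDiff_right : ContDiff ℝ 2 V
  hasCompactSupport_right : HasCompactSupport V
  pos_left : ∀ x ∈ ball 0 1, 0 < U x
  pos_right : ∀ x ∈ ball 0 1, 0 < V x
  neg_lap_left : ∀ x ∈ ball 0 1, -lap U x = lam * V x ^ p
  neg_lap_right : ∀ x ∈ ball 0 1, -lap V x = gam * U x ^ θ
  stable : ∀ φ : 𝔼[N] → ℝ, ContDiff ℝ 1 φ → HasCompactSupport φ → tsupport φ ⊆ ball 0 1 →
    √(lam * gam * p * θ) * ∫ x, V x ^ ((p - 1) / 2) * U x ^ ((θ - 1) / 2) * φ x ^ 2 ≤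
      ∫ x, ‖gradient φ x‖ ^ 2
  size_pos : 0 < m
  setIntegral_sq_le : ∫ x in ball 0 1, V x ^ 2 ≤ m ^ 2

variable {N : ℕ} {lam gam p θ m : ℝ} {U V : 𝔼[N] → ℝ}

theorem IsNormalizedSolution.setIntegral_le (h : IsNormalizedSolution lam gam p θ m U V) :
    ∫ x in ball 0 1, V x ≤ (unitBallVolume N + 1) * m := by
  have hV : Continuous V := h.contDiff_right.continuous
  refine setIntegral_le_of_setIntegral_rpow_le measurableSet_ball measure_ball_lt_top.ne one_le_two
    h.size_pos (fun x hx => (h.pos_right x hx).le) (integrableOn_ball_of_continuous hV 0 1) ?_ ?_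
  · simpa only [rpow_two] using integrableOn_ball_of_continuous (F := (V · ^ 2)) (by fun_prop) 0 1
  · simpa only [rpow_two, one_mul] using h.setIntegral_sq_le

theorem IsNormalizedSolution.mul_setIntegral_rpow_le (h : IsNormalizedSolution lam gam p θ m U V)
    (hgam : 0 ≤ gam) (χ : ContDiffBump (0 : 𝔼[N])) (hχ : χ.rOut < 1) :
    gam * ∫ x in ball 0 χ.rIn, U x ^ θ ≤ -∫ x, V x * lap χ x := by
  have hχV : ContDiff ℝ 2 χ := χ.contDiff
  have hnonneg : ∀ x, 0 ≤ -lap V x * χ x := fun x => by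
    by_cases hx : x ∈ ball 0 1
    · have := h.pos_left x hx
      have := χ.nonneg (x := x)
      rw [h.neg_lap_right x hx]
      positivity
    · rw [χ.zero_of_le_dist (hχ.le.trans (not_lt.mp hx)), mul_zero]
  have hint : Integrable fun x => -lap V x * χ x :=
    ((continuous_lap h.contDiff_right).neg.mul χ.continuous).integrable_of_hasCompactSupport
      χ.hasCompactSupport.mul_left
  calc gam * ∫ x in ball 0 χ.rIn, U x ^ θ = ∫ x in ball 0 χ.rIn, -lap V x * χ x := by
        rw [← integral_const_mul]
        refine setIntegral_congr_fun measurableSet_ball fun x hx => ?_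
        simp only [h.neg_lap_right x (ball_subset_ball (χ.rIn_lt_rOut.trans hχ).le hx),
          χ.one_of_mem_closedBall (ball_subset_closedBall hx), mul_one]
    _ ≤ ∫ x, -lap V x * χ x := setIntegral_le_integral hint (.of_forall hnonneg)
    _ = -∫ x, V x * lap χ x := by
        simp_rw [neg_mul]
        rw [integral_neg, integral_lap_mul h.contDiff_right hχV χ.hasCompactSupport]

theorem exists_setIntegral_rpow_le (N : ℕ) (hgam : 0 < gam) (p θ lam : ℝ) :
    ∃ C, 0 ≤ C ∧ ∀ (m : ℝ) (U V : 𝔼[N] → ℝ), IsNormalizedSolution lam gam p θ m U V →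
      ∫ x in ball 0 (9 / 10), U x ^ θ ≤ C * m := by
  let χ : ContDiffBump (0 : 𝔼[N]) := ⟨9 / 10, 19 / 20, by norm_num, by norm_num⟩
  have hχ : χ.rOut < 1 := by norm_num [χ]
  have hlap : Continuous (lap χ) := continuous_lap χ.contDiff
  obtain ⟨D, hD⟩ := (hasCompactSupport_lap χ.hasCompactSupport).exists_bound_of_continuous hlap
  have hD₀ : 0 ≤ D := (norm_nonneg _).trans (hD 0)
  have hω := unitBallVolume_nonneg N
  refine ⟨gam⁻¹ * (D * (unitBallVolume N + 1)), by positivity, fun m U V h => ?_⟩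
  have hV : Continuous V := h.contDiff_right.continuous
  have hsupp : ∀ x ∉ ball (0 : 𝔼[N]) 1, -(V x * lap χ x) = 0 := fun x hx => by
    rw [lap_eq_zero_of_notMem_tsupport fun hx' => hx ?_, mul_zero, neg_zero]
    exact closedBall_subset_ball hχ (χ.tsupport_eq ▸ hx')
  have hbound : -∫ x, V x * lap χ x ≤ D * ∫ x in ball 0 1, V x := by
    rw [← integral_neg, ← setIntegral_eq_integral_of_forall_compl_eq_zero hsupp,
      ← integral_const_mul]
    refine setIntegral_mono_on (integrableOn_ball_of_continuous (by fun_prop) 0 1)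
      (integrableOn_ball_of_continuous (by fun_prop) 0 1) measurableSet_ball fun x hx => ?_
    nlinarith [h.pos_right x hx, neg_le_of_abs_le (hD x)]
  rw [mul_assoc, mul_assoc, le_inv_mul_iff₀ hgam]
  calc gam * ∫ x in ball 0 (9 / 10), U x ^ θ ≤ -∫ x, V x * lap χ x :=
        h.mul_setIntegral_rpow_le hgam.le χ hχ
    _ ≤ D * ∫ x in ball 0 1, V x := hbound
    _ ≤ D * ((unitBallVolume N + 1) * m) := mul_le_mul_of_nonneg_left h.setIntegral_le hD₀

theorem exists_setIntegral_le (N : ℕ) (hgam : 0 < gam) (hθ : 1 ≤ θ) (p lam : ℝ) :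
    ∃ C, 0 ≤ C ∧ ∀ (m : ℝ) (U V : 𝔼[N] → ℝ), IsNormalizedSolution lam gam p θ m U V →
      ∫ x in ball 0 (9 / 10), U x ≤ C * m ^ (1 / θ) := by
  obtain ⟨C, hC, hCm⟩ := exists_setIntegral_rpow_le N hgam p θ lam
  refine ⟨volume.real (ball (0 : 𝔼[N]) (9 / 10)) + C, by positivity, fun m U V h => ?_⟩
  have hU : Continuous U := h.contDiff_left.continuous
  refine setIntegral_le_of_setIntegral_rpow_le measurableSet_ball measure_ball_lt_top.ne hθ
    (rpow_pos_of_pos h.size_pos _)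
    (fun x hx => (h.pos_left x (ball_subset_ball (by norm_num) hx)).le)
    (integrableOn_ball_of_continuous hU 0 _)
    (integrableOn_ball_of_continuous (hU.rpow_const fun _ => .inr (by linarith)) 0 _) ?_
  rw [← rpow_mul h.size_pos.le, one_div_mul_cancel (by linarith), rpow_one]
  exact hCm m U V h

end Normalized

/-! ### The comparison between the two components -/

section Comparison

/-- The constant `K` for which `K V^((p+1)/(θ+1))` is a subsolution of the equation of `U` wherever
it stays below `U`, that is `K^(θ+1) (p+1) γ = λ (θ+1)`. -/
def comparisonConst (lam gam p θ : ℝ) : ℝ := (lam * (θ + 1) / ((p + 1) * gam)) ^ (1 / (θ + 1))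

variable {N : ℕ} {lam gam p θ m : ℝ} {U V : 𝔼[N] → ℝ} {x : 𝔼[N]}

theorem comparisonConst_pos (hp : 0 < p + 1) (hθ : 0 < θ + 1) (hlam : 0 < lam) (hgam : 0 < gam) :
    0 < comparisonConst lam gam p θ := by
  unfold comparisonConst; positivity

theorem comparisonConst_rpow (hp : 0 < p + 1) (hθ : 0 < θ + 1) (hlam : 0 < lam) (hgam : 0 < gam) :
    comparisonConst lam gam p θ ^ (θ + 1) = lam * (θ + 1) / ((p + 1) * gam) := by
  rw [comparisonConst, ← rpow_mul (by positivity), one_div_mul_cancel hθ.ne', rpow_one]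

-- The strict inequality `(θ + 1) / (p + 1) < pθ` is what makes stability effective.
theorem exists_comparisonConst_lt (hp : 1 < p) (hpθ : p ≤ θ) (hlam : 0 < lam) (hgam : 0 < gam) :
    ∃ b, comparisonConst lam gam p θ < b ∧ gam * b ^ ((θ + 1) / 2) < √(lam * gam * p * θ) := by
  have hp₁ : 0 < p + 1 := by linarith
  have hθ₁ : 0 < θ + 1 := by linarith
  set K := comparisonConst lam gam p θ
  have hK : 0 < K := comparisonConst_pos hp₁ hθ₁ hlam hgam
  have hstrict : gam * K ^ ((θ + 1) / 2) < √(lam * gam * p * θ) := by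
    refine lt_sqrt_of_sq_lt ?_
    have hsq : (K ^ ((θ + 1) / 2)) ^ 2 = lam * (θ + 1) / ((p + 1) * gam) := by
      rw [← rpow_mul_natCast hK.le, Nat.cast_ofNat, div_mul_cancel₀ _ two_ne_zero,
        comparisonConst_rpow hp₁ hθ₁ hlam hgam]
    have hratio : (θ + 1) / (p + 1) < p * θ := by
      rw [div_lt_iff₀ hp₁]
      nlinarith [mul_pos (by linarith : 0 < θ) (mul_pos (by linarith : 0 < p) (sub_pos.mpr hp))]
    calc (gam * K ^ ((θ + 1) / 2)) ^ 2 = lam * gam * ((θ + 1) / (p + 1)) := by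
          rw [mul_pow, hsq]; field_simp
      _ < lam * gam * (p * θ) := by gcongr
      _ = lam * gam * p * θ := by ring
  have hcont : ContinuousAt (fun b : ℝ => gam * b ^ ((θ + 1) / 2)) K :=
    (continuousAt_rpow_const _ _ (.inl hK.ne')).const_mul gam
  obtain ⟨b, hlt, hKb⟩ := ((hcont.eventually_lt_const hstrict).filter_mono
    nhdsWithin_le_nhds |>.and (eventually_mem_nhdsWithin (s := Ioi K))).exists
  exact ⟨b, hKb, hlt⟩

theorem mul_rpow_le_of_comparisonConst_mul_le (hp : 0 < p + 1) (hθ : 0 ≤ θ) (hlam : 0 < lam)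
    (hgam : 0 < gam) {u v : ℝ} (hv : 0 < v)
    (hle : comparisonConst lam gam p θ * v ^ ((p + 1) / (θ + 1)) ≤ u) :
    lam * v ^ p ≤ comparisonConst lam gam p θ *
      ((p + 1) / (θ + 1) * v ^ ((p + 1) / (θ + 1) - 1) * (gam * u ^ θ)) := by
  have hθ₁ : 0 < θ + 1 := by linarith
  set K := comparisonConst lam gam p θ
  have hK : 0 < K := comparisonConst_pos hp hθ₁ hlam hgam
  have hKlam : lam = K * ((p + 1) / (θ + 1) * (gam * K ^ θ)) := by
    have hKpow : K ^ θ * K = lam * (θ + 1) / ((p + 1) * gam) := by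
      rw [← rpow_add_one hK.ne', comparisonConst_rpow hp hθ₁ hlam hgam]
    calc lam = (p + 1) / (θ + 1) * gam * (K ^ θ * K) := by rw [hKpow]; field_simp
      _ = K * ((p + 1) / (θ + 1) * (gam * K ^ θ)) := by ring
  have hvp : v ^ p = v ^ ((p + 1) / (θ + 1) - 1) * (v ^ ((p + 1) / (θ + 1))) ^ θ := by
    rw [← rpow_mul hv.le, ← rpow_add hv]
    congr 1
    field_simp
    ring
  calc lam * v ^ p = K * ((p + 1) / (θ + 1) * v ^ ((p + 1) / (θ + 1) - 1) *
        (gam * (K * v ^ ((p + 1) / (θ + 1))) ^ θ)) := by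
        rw [hvp, mul_rpow hK.le (by positivity)]
        conv_lhs => rw [hKlam]
        ring
    _ ≤ _ := by gcongr

theorem IsNormalizedSolution.lap_sub_rpow_nonneg (h : IsNormalizedSolution lam gam p θ m U V)
    (hp : 0 < p + 1) (hpθ : p ≤ θ) (hθ : 0 ≤ θ) (hlam : 0 < lam) (hgam : 0 < gam)
    (hx : x ∈ ball 0 1)
    (hle : comparisonConst lam gam p θ * V x ^ ((p + 1) / (θ + 1)) ≤ U x) :
    0 ≤ lap (fun y => U y - comparisonConst lam gam p θ * V y ^ ((p + 1) / (θ + 1))) x := by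
  have hθ₁ : 0 < θ + 1 := by linarith
  have hK := comparisonConst_pos hp hθ₁ hlam hgam
  have hVx := h.pos_right x hx
  have hkey := mul_rpow_le_of_comparisonConst_mul_le hp hθ hlam hgam hVx hle
  set K := comparisonConst lam gam p θ
  set σ := (p + 1) / (θ + 1) with hσ
  have hσ₁ : 0 ≤ 1 - σ := by rw [sub_nonneg, hσ, div_le_one hθ₁]; linarith
  have hlapV : lap (fun y => V y ^ σ) x =
      σ * V x ^ (σ - 1) * lap V x + σ * ((σ - 1) * V x ^ (σ - 1 - 1)) * ‖gradient V x‖ ^ 2 := by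
    refine lap_comp (h := (· ^ σ)) (h' := fun t => σ * t ^ (σ - 1)) ?_ ?_
      h.contDiff_right.contDiffAt
    · filter_upwards [lt_mem_nhds hVx] with t ht using hasDerivAt_rpow_const (.inl ht.ne')
    · exact (hasDerivAt_rpow_const (.inl hVx.ne')).const_mul σ
  have hconcave : 0 ≤ K * (σ * ((1 - σ) * V x ^ (σ - 1 - 1)) * ‖gradient V x‖ ^ 2) := by positivity
  rw [lap_sub_const_mul h.contDiff_left.contDiffAt
    (h.contDiff_right.contDiffAt.rpow_const_of_ne hVx.ne'), hlapV,
    ← neg_neg (lap U x), ← neg_neg (lap V x), h.neg_lap_left x hx, h.neg_lap_right x hx]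
  linarith

theorem exists_sub_rpow_le (N : ℕ) (hp : 0 < p + 1) (hpθ : p ≤ θ) (hθ : 1 ≤ θ) (hlam : 0 < lam)
    (hgam : 0 < gam) :
    ∃ C, 0 ≤ C ∧ ∀ (m : ℝ) (U V : 𝔼[N] → ℝ), IsNormalizedSolution lam gam p θ m U V →
      ∀ x ∈ ball 0 (8 / 10),
        U x - comparisonConst lam gam p θ * V x ^ ((p + 1) / (θ + 1)) ≤ C * m ^ (1 / θ) := by
  obtain ⟨C, hC, hCm⟩ := exists_setIntegral_le N hgam hθ p lam
  have hK := comparisonConst_pos hp (by linarith : 0 < θ + 1) hlam hgam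
  set K := comparisonConst lam gam p θ
  have hmass := kernelMass_pos N
  refine ⟨4 * ((1 / 10 : ℝ) ^ N)⁻¹ * C / kernelMass N, by positivity, fun m U V h x hx => ?_⟩
  set w : 𝔼[N] → ℝ := fun y => U y - K * V y ^ ((p + 1) / (θ + 1))
  have hsub : ball x (1 / 10) ⊆ ball 0 (9 / 10) :=
    ball_subset_ball' (by have := mem_ball.mp hx; linarith)
  have hsub₁ : ball (0 : 𝔼[N]) (9 / 10) ⊆ ball 0 1 := ball_subset_ball (by norm_num)
  have hwU : ∀ y ∈ ball x (1 / 10), max (w y) 0 ≤ U y := fun y hy => by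
    have := h.pos_right y (hsub₁ (hsub hy))
    exact max_le (sub_le_self _ (by positivity)) (h.pos_left y (hsub₁ (hsub hy))).le
  have hwC : ContDiffOn ℝ 2 w (ball x (2 / 10)) := fun y hy => by
    have hy₁ : y ∈ ball 0 1 := ball_subset_ball' (by have := mem_ball.mp hx; linarith) hy
    exact (h.contDiff_left.contDiffAt.sub (contDiffAt_const.mul
      (h.contDiff_right.contDiffAt.rpow_const_of_ne (h.pos_right y hy₁).ne'))).contDiffWithinAt
  have hmean := kernelMass_mul_le_setIntegral_max_of_contDiffOn (x := x) (R := 1 / 10)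
    (by norm_num) (by norm_num) hwC fun y hy hwy =>
      h.lap_sub_rpow_nonneg hp hpθ (by linarith) hlam hgam (hsub₁ (hsub hy)) (sub_nonneg.mp hwy)
  have hU := integrableOn_ball_of_continuous h.contDiff_left.continuous (0 : 𝔼[N]) (9 / 10)
  have hint : ∫ y in ball x (1 / 10), max (w y) 0 ≤ C * m ^ (1 / θ) := by
    calc ∫ y in ball x (1 / 10), max (w y) 0 ≤ ∫ y in ball x (1 / 10), U y :=
          integral_mono_of_nonneg (.of_forall fun y => le_max_right _ _) (hU.mono_set hsub)
            ((ae_restrict_iff' measurableSet_ball).mpr (.of_forall hwU))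
      _ ≤ ∫ y in ball 0 (9 / 10), U y :=
          setIntegral_mono_set hU ((ae_restrict_iff' measurableSet_ball).mpr
            (.of_forall fun y hy => (h.pos_left y (hsub₁ hy)).le)) hsub.eventuallyLE
      _ ≤ C * m ^ (1 / θ) := hCm m U V h
  rw [div_mul_eq_mul_div, le_div_iff₀' hmass, mul_assoc]
  exact hmean.trans (mul_le_mul_of_nonneg_left hint (by positivity))

theorem exists_le_mul_rpow_or_mul_rpow_le (N : ℕ) (hp : 0 < p + 1) (hpθ : p ≤ θ) (hθ : 1 ≤ θ)
    (hlam : 0 < lam) (hgam : 0 < gam) {b : ℝ} (hb : comparisonConst lam gam p θ < b) :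
    ∃ A, 0 ≤ A ∧ ∀ (m : ℝ) (U V : 𝔼[N] → ℝ), IsNormalizedSolution lam gam p θ m U V →
      ∀ x ∈ ball 0 (8 / 10), U x ≤ b * V x ^ ((p + 1) / (θ + 1)) ∨ gam * U x ^ θ ≤ A * m := by
  obtain ⟨C, hC, hCm⟩ := exists_sub_rpow_le N hp hpθ hθ hlam hgam
  have hK := comparisonConst_pos hp (by linarith : 0 < θ + 1) hlam hgam
  set K := comparisonConst lam gam p θ
  have hKb : 0 < b - K := sub_pos.mpr hb
  have hb₀ : 0 < b := hK.trans hb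
  refine ⟨gam * (b * C / (b - K)) ^ θ, by positivity, fun m U V h x hx => ?_⟩
  refine or_iff_not_imp_left.mpr fun hlarge => ?_
  have hm := h.size_pos
  have hUle : U x ≤ b * C / (b - K) * m ^ (1 / θ) := by
    rw [div_mul_eq_mul_div, le_div_iff₀ hKb]
    nlinarith [hCm m U V h x hx]
  have hUx : 0 < U x := h.pos_left x (ball_subset_ball (by norm_num) hx)
  calc gam * U x ^ θ ≤ gam * (b * C / (b - K) * m ^ (1 / θ)) ^ θ := by gcongr
    _ = gam * (b * C / (b - K)) ^ θ * m := by
        rw [mul_rpow (by positivity) (by positivity), ← rpow_mul hm.le,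
          one_div_mul_cancel (by linarith), rpow_one, mul_assoc]

theorem rpow_mul_le_of_le_mul_rpow (hθ : -1 < θ) {b u v : ℝ} (hb : 0 ≤ b)
    (hu : 0 < u) (hv : 0 < v) (hle : u ≤ b * v ^ ((p + 1) / (θ + 1))) :
    u ^ θ * v ≤ b ^ ((θ + 1) / 2) * (v ^ ((p - 1) / 2) * u ^ ((θ - 1) / 2) * v ^ 2) := by
  have hθ₁ : 0 < θ + 1 := by linarith
  have hhalf : u ^ ((θ + 1) / 2) ≤ b ^ ((θ + 1) / 2) * v ^ ((p + 1) / 2) := by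
    refine (rpow_le_rpow hu.le hle (by positivity)).trans_eq ?_
    rw [mul_rpow hb (by positivity), ← rpow_mul hv.le]
    congr 2
    field_simp
  have hsplit : u ^ θ = u ^ ((θ + 1) / 2) * u ^ ((θ - 1) / 2) := by
    rw [← rpow_add hu]
    ring_nf
  have hmerge : v ^ ((p + 1) / 2) * v = v ^ ((p - 1) / 2) * v ^ 2 := by
    rw [← rpow_add_one hv.ne', ← rpow_natCast, ← rpow_add hv]
    push_cast
    ring_nf
  calc u ^ θ * v = u ^ ((θ + 1) / 2) * (u ^ ((θ - 1) / 2) * v) := by rw [hsplit, mul_assoc]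
    _ ≤ b ^ ((θ + 1) / 2) * v ^ ((p + 1) / 2) * (u ^ ((θ - 1) / 2) * v) := by gcongr
    _ = b ^ ((θ + 1) / 2) * (v ^ ((p + 1) / 2) * v * u ^ ((θ - 1) / 2)) := by ring
    _ = _ := by rw [hmerge]; ring

end Comparison

/-! ### Energy estimates -/

section Energy

variable {N : ℕ} {lam gam p θ m : ℝ} {U V : 𝔼[N] → ℝ}

theorem exists_integral_sq_mul_norm_gradient_sq_le {χ : 𝔼[N] → ℝ} {S : Set 𝔼[N]}
    (hS : MeasurableSet S) (hχ : ContDiff ℝ 1 χ) (hχc : HasCompactSupport χ)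
    (hχS : tsupport χ ⊆ S) :
    ∃ D, 0 ≤ D ∧ ∀ f : 𝔼[N] → ℝ, Continuous f → IntegrableOn (fun x => f x ^ 2) S →
      ∫ x, f x ^ 2 * ‖gradient χ x‖ ^ 2 ≤ D * ∫ x in S, f x ^ 2 := by
  have hgrad := continuous_gradient hχ
  obtain ⟨D, hD⟩ := (hasCompactSupport_gradient hχc).exists_bound_of_continuous hgrad
  refine ⟨D ^ 2, sq_nonneg D, fun f hf hfS => ?_⟩
  have hsupp : ∀ x ∉ S, f x ^ 2 * ‖gradient χ x‖ ^ 2 = 0 := fun x hx => by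
    rw [gradient_eq_zero_of_notMem_tsupport (notMem_subset hχS hx)]
    simp
  have hint : Integrable fun x => f x ^ 2 * ‖gradient χ x‖ ^ 2 :=
    ((hf.pow 2).mul (hgrad.norm.pow 2)).integrable_of_hasCompactSupport <|
      .intro hχc fun x hx => by simp [gradient_eq_zero_of_notMem_tsupport hx]
  rw [← setIntegral_eq_integral_of_forall_compl_eq_zero hsupp, ← integral_const_mul]
  refine setIntegral_mono_on hint.integrableOn (hfS.const_mul _) hS fun x _ => ?_
  rw [mul_comm]
  gcongr
  exact hD x

theorem IsNormalizedSolution.setIntegral_neg_lap_mul_le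
    (h : IsNormalizedSolution lam gam p θ m U V) (hgam : 0 ≤ gam) (χ : ContDiffBump (0 : 𝔼[N]))
    (hχ : χ.rOut < 1) :
    ∫ x in ball 0 χ.rIn, -lap V x * V x ≤ ∫ x, -lap V x * V x * χ x ^ 2 := by
  have hχc : Continuous χ := χ.continuous
  have hV := h.contDiff_right.continuous
  have hlap := continuous_lap h.contDiff_right
  have hnonneg : ∀ x, 0 ≤ -lap V x * V x * χ x ^ 2 := fun x => by
    by_cases hx : x ∈ ball 0 1
    · have := h.pos_left x hx
      have := h.pos_right x hx
      rw [h.neg_lap_right x hx]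
      positivity
    · rw [χ.zero_of_le_dist (hχ.le.trans (not_lt.mp hx)), zero_pow two_ne_zero, mul_zero]
  have hint : Integrable fun x => -lap V x * V x * χ x ^ 2 :=
    Continuous.integrable_of_hasCompactSupport (by fun_prop) <|
      .intro χ.hasCompactSupport fun x hx => by simp [image_eq_zero_of_notMem_tsupport hx]
  refine (setIntegral_congr_fun measurableSet_ball fun x hx => ?_).trans_le
    (setIntegral_le_integral hint (.of_forall hnonneg))
  simp only [χ.one_of_mem_closedBall (ball_subset_closedBall hx), one_pow, mul_one]

theorem IsNormalizedSolution.setIntegral_le_of_subset (h : IsNormalizedSolution lam gam p θ m U V)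
    {S : Set 𝔼[N]} (hS : S ⊆ ball 0 1) : ∫ x in S, V x ≤ (unitBallVolume N + 1) * m :=
  (setIntegral_mono_set (integrableOn_ball_of_continuous h.contDiff_right.continuous 0 1)
    ((ae_restrict_iff' measurableSet_ball).mpr (.of_forall fun x hx => (h.pos_right x hx).le))
    hS.eventuallyLE).trans h.setIntegral_le

theorem IsNormalizedSolution.integral_neg_lap_mul_le (h : IsNormalizedSolution lam gam p θ m U V)
    (hp : 1 ≤ p) (hθ : 1 ≤ θ) (χ : ContDiffBump (0 : 𝔼[N])) (hχ : χ.rOut ≤ 1) {κ A : ℝ}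
    (hA : 0 ≤ A) (hle : ∀ x ∈ ball 0 χ.rOut, gam * U x ^ θ * V x ≤
      κ * (V x ^ ((p - 1) / 2) * U x ^ ((θ - 1) / 2) * V x ^ 2) + A * m * V x) :
    ∫ x, -lap V x * V x * χ x ^ 2 ≤
      κ * (∫ x, V x ^ ((p - 1) / 2) * U x ^ ((θ - 1) / 2) * (V x * χ x) ^ 2) +
        A * (unitBallVolume N + 1) * m ^ 2 := by
  have hV : Continuous V := h.contDiff_right.continuous
  have hm := h.size_pos
  have hχc : Continuous χ := χ.continuous
  set w : 𝔼[N] → ℝ := fun x => V x ^ ((p - 1) / 2) * U x ^ ((θ - 1) / 2)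
  have hw : Continuous w := (hV.rpow_const fun _ => .inr (by linarith)).mul
    (h.contDiff_left.continuous.rpow_const fun _ => .inr (by linarith))
  have hlap : Continuous (lap V) := continuous_lap h.contDiff_right
  have hball : ball (0 : 𝔼[N]) χ.rOut ⊆ ball 0 1 := ball_subset_ball hχ
  have hrestrict : ∀ {g : 𝔼[N] → ℝ}, (∀ x, χ x = 0 → g x = 0) →
      ∫ x in ball 0 χ.rOut, g x = ∫ x, g x := fun hg =>
    setIntegral_eq_integral_of_forall_compl_eq_zero fun x hx =>
      hg x (χ.zero_of_le_dist (not_lt.mp hx))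
  rw [← hrestrict fun x hx => by rw [hx]; ring, ← hrestrict fun x hx => by rw [hx]; ring]
  calc ∫ x in ball 0 χ.rOut, -lap V x * V x * χ x ^ 2
      ≤ ∫ x in ball 0 χ.rOut, (κ * (w x * (V x * χ x) ^ 2) + A * m * V x) := by
        refine setIntegral_mono_on (integrableOn_ball_of_continuous (by fun_prop) _ _)
          (integrableOn_ball_of_continuous (by fun_prop) _ _) measurableSet_ball fun x hx => ?_
        rw [h.neg_lap_right x (hball hx)]
        have hVx := h.pos_right x (hball hx)
        have hχ₁ : A * m * V x * χ x ^ 2 ≤ A * m * V x :=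
          mul_le_of_le_one_right (by positivity) (pow_le_one₀ χ.nonneg χ.le_one)
        linarith [mul_le_mul_of_nonneg_right (hle x hx) (sq_nonneg (χ x))]
    _ = κ * (∫ x in ball 0 χ.rOut, w x * (V x * χ x) ^ 2) +
          A * m * ∫ x in ball 0 χ.rOut, V x := by
        rw [integral_add (integrableOn_ball_of_continuous (by fun_prop) _ _)
          (integrableOn_ball_of_continuous (by fun_prop) _ _), integral_const_mul,
          integral_const_mul]
    _ ≤ κ * (∫ x in ball 0 χ.rOut, w x * (V x * χ x) ^ 2) +
          A * m * ((unitBallVolume N + 1) * m) := by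
        gcongr
        exact h.setIntegral_le_of_subset hball
    _ = _ := by ring

theorem exists_mul_rpow_mul_le (N : ℕ) (hp : 1 < p) (hpθ : p ≤ θ) (hlam : 0 < lam)
    (hgam : 0 < gam) :
    ∃ κ A, 0 ≤ κ ∧ κ < √(lam * gam * p * θ) ∧ 0 ≤ A ∧
      ∀ (m : ℝ) (U V : 𝔼[N] → ℝ), IsNormalizedSolution lam gam p θ m U V →
        ∀ x ∈ ball 0 (8 / 10), gam * U x ^ θ * V x ≤
          κ * (V x ^ ((p - 1) / 2) * U x ^ ((θ - 1) / 2) * V x ^ 2) + A * m * V x := by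
  obtain ⟨b, hKb, hbs⟩ := exists_comparisonConst_lt hp hpθ hlam hgam
  obtain ⟨A, hA, hsplit⟩ := exists_le_mul_rpow_or_mul_rpow_le N (by linarith) hpθ (by linarith)
    hlam hgam hKb
  have hb : 0 < b := (comparisonConst_pos (by linarith) (by linarith) hlam hgam).trans hKb
  refine ⟨gam * b ^ ((θ + 1) / 2), A, by positivity, hbs, hA, fun m U V h x hx => ?_⟩
  have hx₁ : x ∈ ball 0 1 := ball_subset_ball (by norm_num) hx
  have hUx := h.pos_left x hx₁
  have hVx := h.pos_right x hx₁
  have hm := h.size_pos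
  rcases hsplit m U V h x hx with hx₂ | hx₂
  · refine le_add_of_le_of_nonneg ?_ (by positivity)
    rw [mul_assoc gam, mul_assoc gam]
    exact mul_le_mul_of_nonneg_left
      (rpow_mul_le_of_le_mul_rpow (by linarith) hb.le hUx hVx hx₂) hgam.le
  · exact le_add_of_nonneg_of_le (by positivity) (by gcongr)

theorem exists_energy_le (hp : 1 < p) (hpθ : p ≤ θ) (hlam : 0 < lam) (hgam : 0 < gam)
    (χ : ContDiffBump (0 : 𝔼[N])) (hχ : χ.rOut ≤ 8 / 10) :
    ∃ C, 0 ≤ C ∧ ∀ (m : ℝ) (U V : 𝔼[N] → ℝ), IsNormalizedSolution lam gam p θ m U V →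
      ∫ x, -lap V x * V x * χ x ^ 2 ≤ C * m ^ 2 ∧
        ∫ x, ‖gradient (fun y => V y * χ y) x‖ ^ 2 ≤ C * m ^ 2 := by
  obtain ⟨κ, A, hκ, hκs, hA, hpoint⟩ := exists_mul_rpow_mul_le N hp hpθ hlam hgam
  have hχS : tsupport χ ⊆ ball 0 1 :=
    χ.tsupport_eq.trans_subset (closedBall_subset_ball (by linarith))
  have hχ₁ : ContDiff ℝ 1 χ := χ.contDiff
  obtain ⟨D, hD, hgrad⟩ :=
    exists_integral_sq_mul_norm_gradient_sq_le measurableSet_ball hχ₁ χ.hasCompactSupport hχS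
  set s := √(lam * gam * p * θ)
  have hω := unitBallVolume_nonneg N
  set E := A * (unitBallVolume N + 1)
  have hsκ : 0 < s - κ := sub_pos.mpr hκs
  have hs : 0 ≤ s := sqrt_nonneg _
  refine ⟨(κ * D + s * E) / (s - κ) + D, by positivity, fun m U V h => ?_⟩
  have hupper := h.integral_neg_lap_mul_le hp.le (by linarith) χ (by linarith) hA
    fun x hx => hpoint m U V h x (ball_subset_ball hχ hx)
  have hstable := h.stable _ ((h.contDiff_right.of_le one_le_two).mul hχ₁)
    χ.hasCompactSupport.mul_left (tsupport_mul_subset_right.trans hχS)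
  have hgradV := (hgrad V h.contDiff_right.continuous
    (integrableOn_ball_of_continuous (F := (V · ^ 2)) (h.contDiff_right.continuous.pow 2)
      0 1)).trans (mul_le_mul_of_nonneg_left h.setIntegral_sq_le hD)
  rw [integral_norm_gradient_mul_sq h.contDiff_right hχ₁ χ.hasCompactSupport] at hstable ⊢
  set X := ∫ x, -lap V x * V x * χ x ^ 2
  have hX : X ≤ (κ * D + s * E) / (s - κ) * m ^ 2 := by
    rw [div_mul_eq_mul_div, le_div_iff₀ hsκ]
    linarith [mul_le_mul_of_nonneg_left hupper hs, mul_le_mul_of_nonneg_left hstable hκ,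
      mul_le_mul_of_nonneg_left hgradV hκ]
  have hDm : 0 ≤ D * m ^ 2 := by positivity
  constructor <;> linarith

end Energy

/-! ### The exceptional set -/

section ExceptionalSet

theorem min_mul_rpow_le {a B v t e : ℝ} (ha : 0 ≤ a) (hB : 0 ≤ B) (hv : 0 < v) (ht : 0 < t)
    (he : 1 ≤ e) : min a (B * v ^ e) ≤ B * t ^ (e - 1) * v + a * v / t := by
  rcases le_total v t with hvt | htv
  · refine le_add_of_le_of_nonneg ((min_le_right _ _).trans ?_) (by positivity)
    calc B * v ^ e = B * v ^ (e - 1) * v := by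
          rw [mul_assoc, ← rpow_add_one hv.ne', sub_add_cancel]
      _ ≤ B * t ^ (e - 1) * v := by
          gcongr
  · refine le_add_of_nonneg_of_le (by positivity) ((min_le_left _ _).trans ?_)
    rw [le_div_iff₀ ht]
    gcongr

variable {N : ℕ}

theorem ofReal_le_radialPotential {F f : 𝔼[N] → ℝ} {x : 𝔼[N]} {R a I c : ℝ}
    (hF : ContDiff ℝ 2 F) (hFc : HasCompactSupport F) (hR : 0 < R) (hR₁ : R ≤ 1) (ha : 0 ≤ a)
    (hc : 0 ≤ c) (hF₀ : ∀ y ∈ ball x R, 0 ≤ F y) (hI : ∫ y in ball x R, F y ≤ I)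
    (hlap : ∀ y ∈ ball x R, -lap F y ≤ a + f y)
    (hlevel : 4 * (R ^ N)⁻¹ * I + a * unitBallVolume N + c ≤ kernelMass N * F x) :
    ENNReal.ofReal c ≤ radialPotential R (fun y => ENNReal.ofReal (f y)) x := by
  have hI₀ : 0 ≤ I := (setIntegral_nonneg measurableSet_ball hF₀).trans hI
  have hω := unitBallVolume_nonneg N
  set P := radialPotential R (fun y => ENNReal.ofReal (f y)) x
  have hmean : ∫ y, F (x + R • y) * meanKernel y ≤ 4 * (R ^ N)⁻¹ * I :=
    (integral_comp_mul_meanKernel_le hF.continuous hR hF₀).trans (by gcongr)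
  have hpot : radialPotential R (fun y => ENNReal.ofReal (-lap F y)) x ≤
      ENNReal.ofReal (a * unitBallVolume N) + P := by
    rw [ENNReal.ofReal_mul ha, unitBallVolume, ofReal_measureReal measure_ball_lt_top.ne]
    refine (radialPotential_mono fun y hy => ?_).trans (radialPotential_const_add_le hR₁ _ _)
    exact (ENNReal.ofReal_le_ofReal (hlap y hy)).trans ENNReal.ofReal_add_le
  refine (ENNReal.add_le_add_iff_left
    (ENNReal.ofReal_ne_top (r := 4 * (R ^ N)⁻¹ * I + a * unitBallVolume N))).mp ?_
  calc ENNReal.ofReal (4 * (R ^ N)⁻¹ * I + a * unitBallVolume N) + ENNReal.ofReal c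
      = ENNReal.ofReal (4 * (R ^ N)⁻¹ * I + a * unitBallVolume N + c) :=
        (ENNReal.ofReal_add (by positivity) hc).symm
    _ ≤ ENNReal.ofReal (kernelMass N * F x) := ENNReal.ofReal_le_ofReal hlevel
    _ ≤ ENNReal.ofReal (4 * (R ^ N)⁻¹ * I) + (ENNReal.ofReal (a * unitBallVolume N) + P) :=
        (ofReal_kernelMass_mul_le hF hFc hR.le hR₁).trans
          (add_le_add (ENNReal.ofReal_le_ofReal hmean) hpot)
    _ = ENNReal.ofReal (4 * (R ^ N)⁻¹ * I + a * unitBallVolume N) + P := by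
        rw [← add_assoc, ← ENNReal.ofReal_add (by positivity) (by positivity)]

theorem mul_volume_real_superlevel_le {F f : 𝔼[N] → ℝ} {s D : Set 𝔼[N]} {R a I c : ℝ}
    (hF : ContDiff ℝ 2 F) (hFc : HasCompactSupport F) (hR : 0 < R) (hR₁ : R ≤ 1) (ha : 0 ≤ a)
    (hc : 0 ≤ c) (hD : MeasurableSet D) (hs : ∀ x ∈ s, ball x R ⊆ D) (hF₀ : ∀ y ∈ D, 0 ≤ F y)
    (hI : ∀ x ∈ s, ∫ y in ball x R, F y ≤ I) (hf : Measurable f) (hfD : IntegrableOn f D)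
    (hf₀ : ∀ y ∈ D, 0 ≤ f y) (hlap : ∀ y ∈ D, -lap F y ≤ a + f y) :
    c * volume.real
        (s ∩ {x | 4 * (R ^ N)⁻¹ * I + a * unitBallVolume N + c ≤ kernelMass N * F x}) ≤
      unitBallVolume N * ∫ x in D, f x := by
  set g : 𝔼[N] → ENNReal := fun y => ENNReal.ofReal (D.indicator f y)
  have hg : Measurable g := (hf.indicator hD).ennreal_ofReal
  have hgint : ∫⁻ x, g x = ENNReal.ofReal (∫ x in D, f x) := by
    rw [← integral_indicator hD, ofReal_integral_eq_lintegral_ofReal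
      ((integrable_indicator_iff hD).mpr hfD) (.of_forall (indicator_nonneg hf₀))]
  have hlarge : s ∩ {x | 4 * (R ^ N)⁻¹ * I + a * unitBallVolume N + c ≤ kernelMass N * F x} ⊆
      {x | ENNReal.ofReal c ≤ radialPotential R g x} := fun x ⟨hxs, hx⟩ =>
    (ofReal_le_radialPotential hF hFc hR hR₁ ha hc (fun y hy => hF₀ y (hs x hxs hy)) (hI x hxs)
      (fun y hy => hlap y (hs x hxs hy)) hx).trans
      (radialPotential_mono fun y hy => by simp only [g, indicator_of_mem (hs x hxs hy), le_refl])
  have hmarkov : ENNReal.ofReal c * volume {x | ENNReal.ofReal c ≤ radialPotential R g x} ≤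
      volume (ball (0 : 𝔼[N]) 1) * ENNReal.ofReal (∫ x in D, f x) := hgint ▸
    (mul_meas_ge_le_lintegral₀ (measurable_radialPotential hg R).aemeasurable _).trans
      (lintegral_radialPotential_le hg hR₁)
  have hreal := ENNReal.toReal_mono
    (ENNReal.mul_ne_top measure_ball_lt_top.ne ENNReal.ofReal_ne_top)
    ((mul_le_mul_right (measure_mono hlarge) _).trans hmarkov)
  rwa [ENNReal.toReal_mul, ENNReal.toReal_mul, ENNReal.toReal_ofReal hc,
    ENNReal.toReal_ofReal (setIntegral_nonneg hD hf₀)] at hreal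

variable {lam gam p θ : ℝ}

theorem exists_setIntegral_min_le (N : ℕ) (hp : 1 < p) (hpθ : p ≤ θ) (hlam : 0 < lam)
    (hgam : 0 < gam) {B e : ℝ} (hB : 0 ≤ B) (he : 1 ≤ e) :
    ∃ C, 0 ≤ C ∧ ∀ (m : ℝ) (U V : 𝔼[N] → ℝ), IsNormalizedSolution lam gam p θ m U V →
      ∀ t > 0, ∫ x in ball 0 (6 / 10), min (gam * U x ^ θ) (B * V x ^ e) ≤
        C * (t ^ (e - 1) + m / t) * m := by
  let χ : ContDiffBump (0 : 𝔼[N]) := ⟨6 / 10, 7 / 10, by norm_num, by norm_num⟩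
  obtain ⟨D, hD, henergy⟩ := exists_energy_le hp hpθ hlam hgam χ (by norm_num [χ])
  have hω := unitBallVolume_nonneg N
  refine ⟨B * (unitBallVolume N + 1) + D, by positivity, fun m U V h t ht => ?_⟩
  have hm := h.size_pos
  have hV := h.contDiff_right.continuous
  have hlap := continuous_lap h.contDiff_right
  have hUθ : Continuous fun x => U x ^ θ :=
    h.contDiff_left.continuous.rpow_const fun _ => .inr (by linarith)
  have hVe : Continuous fun x => V x ^ e := hV.rpow_const fun _ => .inr (by linarith)
  have hball : ball (0 : 𝔼[N]) (6 / 10) ⊆ ball 0 1 := ball_subset_ball (by norm_num)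
  have hX : ∫ x in ball 0 (6 / 10), -lap V x * V x ≤ D * m ^ 2 :=
    (h.setIntegral_neg_lap_mul_le hgam.le χ (by norm_num [χ])).trans (henergy m U V h).1
  calc ∫ x in ball 0 (6 / 10), min (gam * U x ^ θ) (B * V x ^ e)
      ≤ ∫ x in ball 0 (6 / 10), (B * t ^ (e - 1) * V x + -lap V x * V x / t) := by
        refine setIntegral_mono_on (integrableOn_ball_of_continuous (by fun_prop) _ _)
          (integrableOn_ball_of_continuous (by fun_prop) _ _) measurableSet_ball fun x hx => ?_
        have hUx := h.pos_left x (hball hx)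
        rw [h.neg_lap_right x (hball hx)]
        exact min_mul_rpow_le (by positivity) hB (h.pos_right x (hball hx)) ht he
    _ = B * t ^ (e - 1) * (∫ x in ball 0 (6 / 10), V x) +
          (∫ x in ball 0 (6 / 10), -lap V x * V x) / t := by
        rw [integral_add (integrableOn_ball_of_continuous (by fun_prop) _ _)
          (integrableOn_ball_of_continuous (by fun_prop) _ _), integral_const_mul, integral_div]
    _ ≤ B * t ^ (e - 1) * ((unitBallVolume N + 1) * m) + D * m ^ 2 / t := by
        gcongr
        exact h.setIntegral_le_of_subset hball
    _ = B * (unitBallVolume N + 1) * t ^ (e - 1) * m + D * (m / t) * m := by ring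
    _ ≤ (B * (unitBallVolume N + 1) + D) * (t ^ (e - 1) + m / t) * m := by
        have : 0 ≤ B * (unitBallVolume N + 1) := by positivity
        have : 0 ≤ D * t ^ (e - 1) * m := by positivity
        have : 0 ≤ B * (unitBallVolume N + 1) * (m / t) * m := by positivity
        linarith

end ExceptionalSet

/-! ### Decay of the energy -/

section Decay

variable {N : ℕ} {lam gam p θ : ℝ}

theorem exists_neg_lap_le_add_min (N : ℕ) (hp : 1 < p) (hpθ : p ≤ θ) (hlam : 0 < lam)
    (hgam : 0 < gam) :
    ∃ A B, 0 ≤ A ∧ 0 ≤ B ∧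
      ∀ (m : ℝ) (U V : 𝔼[N] → ℝ), IsNormalizedSolution lam gam p θ m U V →
        ∀ x ∈ ball 0 (8 / 10), -lap V x ≤
          A * m + min (gam * U x ^ θ) (B * V x ^ ((p + 1) / (θ + 1) * θ)) := by
  obtain ⟨b, hb, -⟩ := exists_comparisonConst_lt hp hpθ hlam hgam
  obtain ⟨A, hA, hsplit⟩ :=
    exists_le_mul_rpow_or_mul_rpow_le N (by linarith) hpθ (by linarith) hlam hgam hb
  have hb₀ : 0 < b := (comparisonConst_pos (by linarith) (by linarith) hlam hgam).trans hb
  refine ⟨A, gam * b ^ θ, hA, by positivity, fun m U V h x hx => ?_⟩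
  have hx₁ : x ∈ ball 0 1 := ball_subset_ball (by norm_num) hx
  have hm := h.size_pos
  have hUx := h.pos_left x hx₁
  have hVx := h.pos_right x hx₁
  rw [h.neg_lap_right x hx₁]
  rcases hsplit m U V h x hx with hle | hle
  · refine le_add_of_nonneg_of_le (by positivity) (le_min le_rfl ?_)
    calc gam * U x ^ θ ≤ gam * (b * V x ^ ((p + 1) / (θ + 1))) ^ θ := by
          gcongr
          linarith
      _ = gam * b ^ θ * V x ^ ((p + 1) / (θ + 1) * θ) := by
          rw [mul_rpow hb₀.le (by positivity), rpow_mul hVx.le, mul_assoc]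
  · exact le_add_of_le_of_nonneg hle (by positivity)

theorem one_lt_div_mul (hp : 1 < p) (hpθ : p ≤ θ) : 1 < (p + 1) / (θ + 1) * θ := by
  rw [div_mul_eq_mul_div, one_lt_div (by linarith)]
  nlinarith

theorem exists_volume_real_superlevel_le (N : ℕ) (hp : 1 < p) (hpθ : p ≤ θ) (hlam : 0 < lam)
    (hgam : 0 < gam) :
    ∃ L C, 0 ≤ C ∧
      ∀ (m : ℝ) (U V : 𝔼[N] → ℝ), IsNormalizedSolution lam gam p θ m U V →
        ∀ t > 0, volume.real (ball 0 (4 / 10) ∩ {x | L * m ≤ V x}) ≤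
          C * (t ^ ((p + 1) / (θ + 1) * θ - 1) + m / t) := by
  obtain ⟨A, B, hA, hB, hlap⟩ := exists_neg_lap_le_add_min N hp hpθ hlam hgam
  set e := (p + 1) / (θ + 1) * θ
  have he : 1 < e := one_lt_div_mul hp hpθ
  obtain ⟨C, hC, hdensity⟩ := exists_setIntegral_min_le N hp hpθ hlam hgam hB he.le
  have hω := unitBallVolume_nonneg N
  have hmass := kernelMass_pos N
  refine ⟨(4 * ((1 / 10 : ℝ) ^ N)⁻¹ * (unitBallVolume N + 1) + A * unitBallVolume N + 1) /
    kernelMass N, unitBallVolume N * C, by positivity, fun m U V h t ht => ?_⟩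
  have hm := h.size_pos
  set f : 𝔼[N] → ℝ := fun x => min (gam * U x ^ θ) (B * V x ^ e)
  have hf : Continuous f := by
    have := h.contDiff_left.continuous.rpow_const fun _ => .inr (by linarith : 0 ≤ θ)
    have := h.contDiff_right.continuous.rpow_const fun _ => .inr (by linarith : 0 ≤ e)
    fun_prop
  have hball : ball (0 : 𝔼[N]) (6 / 10) ⊆ ball 0 1 := ball_subset_ball (by norm_num)
  have hsmall : ∀ x ∈ ball (0 : 𝔼[N]) (4 / 10), ball x (1 / 10) ⊆ ball 0 (6 / 10) := fun x hx =>
    ball_subset_ball' (by have := mem_ball.mp hx; linarith)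
  have hmeas := mul_volume_real_superlevel_le (R := 1 / 10) (a := A * m) h.contDiff_right
    h.hasCompactSupport_right (by norm_num) (by norm_num) (by positivity) hm.le measurableSet_ball
    hsmall (fun y hy => (h.pos_right y (hball hy)).le)
    (fun x hx => h.setIntegral_le_of_subset ((hsmall x hx).trans hball)) hf.measurable
    (integrableOn_ball_of_continuous hf _ _)
    (fun y hy => by
      have := h.pos_left y (hball hy)
      have := h.pos_right y (hball hy)
      positivity)
    fun y hy => hlap m U V h y (ball_subset_ball (by norm_num) hy)
  refine le_of_mul_le_mul_left ?_ hm
  calc _ ≤ unitBallVolume N * ∫ x in ball 0 (6 / 10), f x := by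
        convert hmeas using 6 with x
        rw [div_mul_eq_mul_div, div_le_iff₀' hmass]
        ring_nf
    _ ≤ unitBallVolume N * (C * (t ^ (e - 1) + m / t) * m) := by
        gcongr
        exact hdensity m U V h t ht
    _ = _ := by ring

theorem exists_setIntegral_sq_le (hN : 3 ≤ N) (hp : 1 < p) (hpθ : p ≤ θ) (hlam : 0 < lam)
    (hgam : 0 < gam) :
    ∃ C, 0 ≤ C ∧ ∀ (m : ℝ) (U V : 𝔼[N] → ℝ), IsNormalizedSolution lam gam p θ m U V →
      ∀ S ⊆ ball 0 (6 / 10), MeasurableSet S →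
        ∫ x in S, V x ^ 2 ≤ C * volume.real S ^ (2 / N : ℝ) * m ^ 2 := by
  let χ : ContDiffBump (0 : 𝔼[N]) := ⟨6 / 10, 7 / 10, by norm_num, by norm_num⟩
  obtain ⟨C, hC, henergy⟩ := exists_energy_le hp hpθ hlam hgam χ (by norm_num [χ])
  have hsob := sobolevConst_nonneg N
  refine ⟨sobolevConst N * C, by positivity, fun m U V h S hS hSm => ?_⟩
  calc ∫ x in S, V x ^ 2 = ∫ x in S, (V x * χ x) ^ 2 :=
        setIntegral_congr_fun hSm fun x hx => by
          simp only [χ.one_of_mem_closedBall (ball_subset_closedBall (hS hx)), mul_one]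
    _ ≤ sobolevConst N * volume.real S ^ (2 / N : ℝ) *
          ∫ x, ‖gradient (fun y => V y * χ y) x‖ ^ 2 :=
        setIntegral_sq_le hN ((h.contDiff_right.of_le one_le_two).mul χ.contDiff)
          χ.hasCompactSupport.mul_left (measure_ne_top_of_subset hS measure_ball_lt_top.ne)
    _ ≤ sobolevConst N * volume.real S ^ (2 / N : ℝ) * (C * m ^ 2) := by
        gcongr
        exact (henergy m U V h).2
    _ = _ := by ring

theorem volume_real_ball_zero [NeZero N] {r : ℝ} (hr : 0 ≤ r) :
    volume.real (ball (0 : 𝔼[N]) r) = r ^ N * unitBallVolume N := by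
  rw [unitBallVolume, measureReal_def, Measure.addHaar_ball _ _ hr, ENNReal.toReal_mul,
    ENNReal.toReal_ofReal (by positivity), finrank_euclideanSpace_fin, measureReal_def]

theorem setIntegral_ball_sdiff_superlevel_sq_le [NeZero N] {f : 𝔼[N] → ℝ} {M r : ℝ} (hr : 0 ≤ r)
    (hf : ∀ x ∈ ball 0 r, 0 ≤ f x) :
    ∫ x in ball 0 r \ {x | M ≤ f x}, f x ^ 2 ≤ M ^ 2 * (r ^ N * unitBallVolume N) := by
  have hfin : volume (ball (0 : 𝔼[N]) r) ≠ ⊤ := measure_ball_lt_top.ne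
  calc ∫ x in ball 0 r \ {x | M ≤ f x}, f x ^ 2
      ≤ M ^ 2 * volume.real (ball (0 : 𝔼[N]) r \ {x | M ≤ f x}) := by
        refine (le_norm_self _).trans (norm_setIntegral_le_of_norm_le_const
          (measure_lt_top_of_subset sdiff_subset hfin) fun x hx => ?_)
        rw [norm_pow, norm_of_nonneg (hf x hx.1)]
        exact pow_le_pow_left₀ (hf x hx.1) (not_le.mp hx.2).le 2
    _ ≤ M ^ 2 * volume.real (ball (0 : 𝔼[N]) r) := by
        gcongr
        exact sdiff_subset
    _ = M ^ 2 * (r ^ N * unitBallVolume N) := by rw [volume_real_ball_zero hr]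

theorem exists_setIntegral_ball_sq_le (hN : 3 ≤ N) (hp : 1 < p) (hpθ : p ≤ θ) (hlam : 0 < lam)
    (hgam : 0 < gam) :
    ∃ C, 0 < C ∧ ∀ (m : ℝ) (U V : 𝔼[N] → ℝ), IsNormalizedSolution lam gam p θ m U V →
      ∀ t > 0, ∀ τ ∈ Ioc (0 : ℝ) (4 / 10), ∫ x in ball 0 τ, V x ^ 2 ≤
        C * (τ ^ N + (t ^ ((p + 1) / (θ + 1) * θ - 1) + m / t) ^ (2 / N : ℝ)) * m ^ 2 := by
  have : NeZero N := ⟨by omega⟩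
  obtain ⟨L, D, hD, hlevel⟩ := exists_volume_real_superlevel_le N hp hpθ hlam hgam
  obtain ⟨E, hE, hsobolev⟩ := exists_setIntegral_sq_le hN hp hpθ hlam hgam
  have hω := unitBallVolume_nonneg N
  refine ⟨L ^ 2 * unitBallVolume N + E * D ^ (2 / N : ℝ) + 1, by positivity,
    fun m U V h t ht τ ⟨hτ, hτ₁⟩ => ?_⟩
  have hm := h.size_pos
  set T := t ^ ((p + 1) / (θ + 1) * θ - 1) + m / t
  have hT : 0 ≤ T := by positivity
  have hV := h.contDiff_right.continuous
  set S : Set 𝔼[N] := {x | L * m ≤ V x}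
  have hS : MeasurableSet S := measurableSet_le measurable_const hV.measurable
  have hexceptional : ∫ x in ball 0 τ ∩ S, V x ^ 2 ≤ E * (D * T) ^ (2 / N : ℝ) * m ^ 2 := by
    refine (hsobolev m U V h _ (inter_subset_left.trans (ball_subset_ball (by linarith)))
      (measurableSet_ball.inter hS)).trans ?_
    gcongr
    refine (measureReal_mono (inter_subset_inter_left _ (ball_subset_ball hτ₁))
      (measure_ne_top_of_subset inter_subset_left measure_ball_lt_top.ne)).trans ?_
    exact hlevel m U V h t ht
  have hregular : ∫ x in ball 0 τ \ S, V x ^ 2 ≤ (L * m) ^ 2 * (τ ^ N * unitBallVolume N) :=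
    setIntegral_ball_sdiff_superlevel_sq_le hτ.le fun x hx =>
      (h.pos_right x (ball_subset_ball (by linarith) hx)).le
  rw [← integral_inter_add_sdiff hS (integrableOn_ball_of_continuous (F := (V · ^ 2))
    (hV.pow 2) 0 τ)]
  rw [mul_rpow hD hT] at hexceptional
  have hcross : 0 ≤ (E * D ^ (2 / N : ℝ) * τ ^ N + L ^ 2 * unitBallVolume N * T ^ (2 / N : ℝ) +
    (τ ^ N + T ^ (2 / N : ℝ))) * m ^ 2 := by positivity
  linarith

theorem exists_mem_Ioc_mul_rpow_le {a b c C : ℝ} (ha : 0 < a) (hb : 0 < b) (hc : 0 < c)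
    (hC : 0 < C) : ∃ t ∈ Ioc 0 b, C * t ^ a ≤ c := by
  refine ⟨min b ((c / C) ^ a⁻¹), ⟨by positivity, min_le_left _ _⟩, ?_⟩
  calc C * min b ((c / C) ^ a⁻¹) ^ a ≤ C * ((c / C) ^ a⁻¹) ^ a := by
        gcongr
        exact min_le_right _ _
    _ = c := by rw [rpow_inv_rpow (by positivity) ha.ne', mul_div_cancel₀ _ hC.ne']

theorem exists_rpow_mul_setIntegral_ball_sq_le (hN : 3 ≤ N) (hp : 1 < p) (hpθ : p ≤ θ)
    (hlam : 0 < lam) (hgam : 0 < gam) {β : ℝ} (hβ : 0 < β) :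
    ∃ ε τ : ℝ, 0 < ε ∧ 0 < τ ∧ τ < 1 ∧
      ∀ (m : ℝ) (U V : 𝔼[N] → ℝ), IsNormalizedSolution lam gam p θ m U V → m ^ 2 ≤ ε →
        τ ^ (2 * β - N) * ∫ x in ball 0 τ, V x ^ 2 ≤ m ^ 2 / 2 := by
  obtain ⟨C, hC, hdecay⟩ := exists_setIntegral_ball_sq_le hN hp hpθ hlam hgam
  set e := (p + 1) / (θ + 1) * θ
  have he : 0 < e - 1 := sub_pos.mpr (one_lt_div_mul hp hpθ)
  have hN₀ : (0 : ℝ) < 2 / N := div_pos two_pos (Nat.cast_pos.mpr (by omega))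
  obtain ⟨τ, ⟨hτ, hτ₁⟩, hτC⟩ : ∃ τ ∈ Ioc 0 (4 / 10), C * τ ^ (2 * β) ≤ 1 / 4 :=
    exists_mem_Ioc_mul_rpow_le (by positivity) (by norm_num) (by norm_num) hC
  obtain ⟨s, ⟨hs, -⟩, hsC⟩ : ∃ s ∈ Ioc (0 : ℝ) 1, C * τ ^ (2 * β - N) * s ^ (2 / N : ℝ) ≤ 1 / 4 :=
    exists_mem_Ioc_mul_rpow_le hN₀ one_pos (by norm_num) (by positivity)
  obtain ⟨t, ⟨ht, -⟩, hts⟩ : ∃ t ∈ Ioc (0 : ℝ) 1, 1 * t ^ (e - 1) ≤ s / 2 :=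
    exists_mem_Ioc_mul_rpow_le he one_pos (by positivity) one_pos
  refine ⟨(t * (s / 2)) ^ 2, τ, by positivity, hτ, by linarith, fun m U V h hm => ?_⟩
  have hm₀ := h.size_pos
  have hsum : t ^ (e - 1) + m / t ≤ s := by
    have : m / t ≤ s / 2 := by
      rw [div_le_iff₀' ht]
      exact (sq_le_sq₀ hm₀.le (by positivity)).mp hm
    linarith
  have hττ : τ ^ (2 * β - N) * τ ^ N = τ ^ (2 * β) := by
    rw [← rpow_natCast, ← rpow_add hτ, sub_add_cancel]
  calc τ ^ (2 * β - N) * ∫ x in ball 0 τ, V x ^ 2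
      ≤ τ ^ (2 * β - N) * (C * (τ ^ N + s ^ (2 / N : ℝ)) * m ^ 2) := by
        gcongr
        refine (hdecay m U V h t ht τ ⟨hτ, hτ₁⟩).trans ?_
        gcongr
    _ = (C * τ ^ (2 * β) + C * τ ^ (2 * β - N) * s ^ (2 / N : ℝ)) * m ^ 2 := by
        rw [← hττ]; ring
    _ ≤ (1 / 4 + 1 / 4) * m ^ 2 := by gcongr
    _ = m ^ 2 / 2 := by ring

end Decay

/-! ### Rescaling to the unit ball -/

theorem tsupport_comp_homeomorph {X Y M : Type*} [TopologicalSpace X] [TopologicalSpace Y] [Zero M]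
    (f : Y → M) (e : X ≃ₜ Y) : tsupport (f ∘ e) = e ⁻¹' tsupport f := by
  rw [tsupport, tsupport, Function.support_comp_eq_preimage, e.preimage_closure]

section Rescaling

variable {N : ℕ} {lam gam p θ : ℝ} {Ω : Set 𝔼[N]} {u v f φ χ : 𝔼[N] → ℝ} {x z : 𝔼[N]} {R : ℝ}

theorem norm_gradient_comp_add_smul_sq (f : 𝔼[N] → ℝ) (z x : 𝔼[N]) (r : ℝ) :
    ‖gradient (fun y => f (z + r • y)) x‖ ^ 2 = r ^ 2 * ‖gradient f (z + r • x)‖ ^ 2 := by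
  simp_rw [norm_gradient_sq_eq_sum, partialDeriv_comp_add_smul, mul_pow, Finset.mul_sum]

theorem IsStable.integral_comp_add_smul_mul_sq_le (hstable : IsStable Ω lam gam p θ u v)
    (hΩ : IsOpen Ω) (hu : ContinuousOn u Ω) (hv : ContinuousOn v Ω) (hu₀ : ∀ x ∈ Ω, 0 < u x)
    (hv₀ : ∀ x ∈ Ω, 0 < v x) (hR : 0 < R) (hφ : ContDiff ℝ 1 φ) (hφc : HasCompactSupport φ)
    (hφΩ : tsupport φ ⊆ (fun x => z + R • x) ⁻¹' Ω) :
    √(lam * gam * p * θ) * ∫ x, R ^ 2 * ((v (z + R • x) + 1) ^ ((p - 1) / 2) *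
      (u (z + R • x) + 1) ^ ((θ - 1) / 2) * φ x ^ 2) ≤ ∫ x, ‖gradient φ x‖ ^ 2 := by
  let e : 𝔼[N] ≃ₜ 𝔼[N] := (Homeomorph.smulOfNeZero R hR.ne').trans (Homeomorph.addLeft z)
  set Φ : 𝔼[N] → ℝ := φ ∘ e.symm
  have hΦ : ContDiff ℝ 1 Φ := hφ.comp (contDiff_const.add contDiff_id |>.const_smul R⁻¹)
  have hΦΩ : tsupport Φ ⊆ Ω := by
    rw [tsupport_comp_homeomorph, ← e.image_eq_preimage_symm]
    exact image_subset_iff.mpr hφΩ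
  have hΦφ : ∀ x, Φ (z + R • x) = φ x := fun x => congrArg φ (e.symm_apply_apply x)
  have hgrad : ∀ x, ‖gradient φ x‖ ^ 2 = R ^ 2 * ‖gradient Φ (z + R • x)‖ ^ 2 := fun x => by
    rw [← norm_gradient_comp_add_smul_sq, funext hΦφ]
  have hmain := hstable.le_of_contDiff hΩ hu hv hu₀ hv₀ hΦ (hφc.comp_homeomorph e.symm) hΦΩ
  rw [setIntegral_eq_integral_of_forall_compl_eq_zero fun y hy => by
      rw [image_eq_zero_of_notMem_tsupport fun h => hy (hΦΩ h)]; simp,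
    setIntegral_eq_integral_of_forall_compl_eq_zero fun y hy => by
      rw [gradient_eq_zero_of_notMem_tsupport fun h => hy (hΦΩ h)]; simp] at hmain
  simp_rw [hgrad, ← hΦφ]
  rw [integral_const_mul, integral_const_mul, integral_comp_add_smul (‖gradient Φ ·‖ ^ 2) z hR,
    integral_comp_add_smul
      (fun y => (v y + 1) ^ ((p - 1) / 2) * (u y + 1) ^ ((θ - 1) / 2) * Φ y ^ 2) z hR]
  have := mul_le_mul_of_nonneg_left hmain (by positivity : 0 ≤ R ^ 2 * (R ^ N)⁻¹)
  linarith

/-- The blow-up `x ↦ R^a (f (z + R x) + 1)`, cut off by `χ` so that it is defined on all of `ℝ^N`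
even if `f` is only controlled on a neighbourhood of the ball `B_R(z)`. -/
def cutoffBlowup (χ f : 𝔼[N] → ℝ) (z : 𝔼[N]) (R a : ℝ) (x : 𝔼[N]) : ℝ :=
  χ x * (R ^ a * (f (z + R • x) + 1))

theorem contDiff_cutoffBlowup {n : WithTop ℕ∞} (hΩ : IsOpen Ω) (hf : ContDiffOn ℝ n f Ω)
    (hχ : ContDiff ℝ n χ) (hχΩ : tsupport χ ⊆ (fun x => z + R • x) ⁻¹' Ω) (a : ℝ) :
    ContDiff ℝ n (cutoffBlowup χ f z R a) := by
  have haffine : ContDiff ℝ n fun x : 𝔼[N] => z + R • x :=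
    contDiff_const.add (contDiff_id.const_smul R)
  exact contDiff_mul_of_tsupport_subset (hΩ.preimage haffine.continuous) hχ hχΩ
    (contDiffOn_const.mul ((hf.comp haffine.contDiffOn fun _ hx => hx).add contDiffOn_const))

theorem cutoffBlowup_of_eq_one (hχ : χ x = 1) (a : ℝ) :
    cutoffBlowup χ f z R a x = R ^ a * (f (z + R • x) + 1) := by
  rw [cutoffBlowup, hχ, one_mul]

theorem cutoffBlowup_pos (hχ : χ x = 1) (hf : 0 < f (z + R • x)) (hR : 0 < R) (a : ℝ) :
    0 < cutoffBlowup χ f z R a x := by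
  rw [cutoffBlowup_of_eq_one hχ]
  positivity

theorem lap_cutoffBlowup (hχ : χ =ᶠ[𝓝 x] 1) (hf : ContDiffAt ℝ 2 f (z + R • x)) (hR : 0 < R)
    (a : ℝ) : lap (cutoffBlowup χ f z R a) x = R ^ (a + 2) * lap f (z + R • x) := by
  have hg : ContDiffAt ℝ 2 (fun y => f (z + R • y)) x :=
    hf.comp x (contDiff_const.add (contDiff_id.const_smul R)).contDiffAt
  have haffine : ∀ t, HasDerivAt (fun t => R ^ a * (t + 1)) (R ^ a) t := fun t => by
    simpa using ((hasDerivAt_id t).add_const 1).const_mul (R ^ a)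
  rw [lap_congr (hχ.mono fun y hy => cutoffBlowup_of_eq_one hy a),
    lap_comp (.of_forall haffine) (hasDerivAt_const _ _) hg, lap_comp_add_smul, rpow_add hR,
    rpow_two]
  ring

theorem neg_lap_cutoffBlowup {g : 𝔼[N] → ℝ} {a b c q : ℝ} (hχ : χ =ᶠ[𝓝 x] 1)
    (hf : ContDiffAt ℝ 2 f (z + R • x)) (hR : 0 < R) (hg : 0 < g (z + R • x))
    (hlap : -lap f (z + R • x) = c * (g (z + R • x) + 1) ^ q) (hab : a + 2 = b * q) :
    -lap (cutoffBlowup χ f z R a) x = c * cutoffBlowup χ g z R b x ^ q := by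
  rw [lap_cutoffBlowup hχ hf hR, cutoffBlowup_of_eq_one hχ.self_of_nhds,
    mul_rpow (by positivity) (by positivity), ← rpow_mul hR.le, hab, ← mul_neg, hlap]
  ring

theorem rpow_mul_setIntegral_cutoffBlowup_sq {ρ : ℝ} (hχ : ∀ x ∈ ball 0 ρ, χ x = 1) (hR : 0 < R)
    (hρ : 0 ≤ ρ) (a : ℝ) :
    ρ ^ (2 * a - N) * ∫ x in ball 0 ρ, cutoffBlowup χ f z R a x ^ 2 =
      (ρ * R) ^ (2 * a - N) * ∫ x in ball z (ρ * R), (f x + 1) ^ 2 := by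
  have hpow : (R ^ a) ^ 2 * (R ^ N)⁻¹ = R ^ (2 * a - N) := by
    rw [rpow_sub hR, rpow_natCast, mul_comm 2 a, rpow_mul hR.le, rpow_two, div_eq_mul_inv]
  calc ρ ^ (2 * a - N) * ∫ x in ball 0 ρ, cutoffBlowup χ f z R a x ^ 2
      = ρ ^ (2 * a - N) * ∫ x in ball 0 ρ, (R ^ a) ^ 2 * (f (z + R • x) + 1) ^ 2 := by
        congr 1
        refine setIntegral_congr_fun measurableSet_ball fun x hx => ?_
        simp only [cutoffBlowup_of_eq_one (hχ x hx), mul_pow]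
    _ = ρ ^ (2 * a - N) * R ^ (2 * a - N) * ∫ x in ball z (R * ρ), (f x + 1) ^ 2 := by
        rw [integral_const_mul, setIntegral_comp_add_smul (fun x => (f x + 1) ^ 2) z hR,
          ← mul_assoc (_ ^ 2), hpow, mul_assoc]
    _ = (ρ * R) ^ (2 * a - N) * ∫ x in ball z (ρ * R), (f x + 1) ^ 2 := by
        rw [mul_rpow hρ hR.le, mul_comm R ρ]

theorem exists_contDiffBump_tsupport_subset {S : Set 𝔼[N]} {r : ℝ} (hS : IsOpen S) (hr : 0 < r)
    (hball : closedBall x r ⊆ S) : ∃ χ : ContDiffBump x, χ.rIn = r ∧ tsupport χ ⊆ S := by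
  obtain ⟨ε, hε, hεS⟩ := (isCompact_closedBall x r).exists_cthickening_subset_open hS hball
  rw [cthickening_closedBall hε.le hr.le] at hεS
  exact ⟨⟨r, ε + r, hr, by linarith⟩, rfl, by rwa [ContDiffBump.tsupport_eq]⟩

theorem IsStable.integral_cutoffBlowup_mul_sq_le (hstable : IsStable Ω lam gam p θ u v)
    (hsol : IsSolution Ω lam gam p θ u v) (hΩ : IsOpen Ω) (hR : 0 < R) {S : Set 𝔼[N]}
    (hSΩ : S ⊆ (fun x => z + R • x) ⁻¹' Ω) (hχ : ∀ x ∈ S, χ x = 1) {a b : ℝ}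
    (hab : b * ((p - 1) / 2) + a * ((θ - 1) / 2) = 2) (hφ : ContDiff ℝ 1 φ)
    (hφc : HasCompactSupport φ) (hφS : tsupport φ ⊆ S) :
    √(lam * gam * p * θ) * ∫ x, cutoffBlowup χ v z R b x ^ ((p - 1) / 2) *
      cutoffBlowup χ u z R a x ^ ((θ - 1) / 2) * φ x ^ 2 ≤ ∫ x, ‖gradient φ x‖ ^ 2 := by
  obtain ⟨hu, hv, hu₀, hv₀, -⟩ := hsol
  have hscale : R ^ (b * ((p - 1) / 2)) * R ^ (a * ((θ - 1) / 2)) = R ^ 2 := by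
    rw [← rpow_add hR, hab, rpow_two]
  convert hstable.integral_comp_add_smul_mul_sq_le hΩ hu.continuousOn hv.continuousOn hu₀ hv₀ hR hφ
    hφc (hφS.trans hSΩ) using 4 with x
  by_cases hx : x ∈ S
  · have hux := hu₀ _ (hSΩ hx)
    have hvx := hv₀ _ (hSΩ hx)
    rw [cutoffBlowup_of_eq_one (hχ x hx), cutoffBlowup_of_eq_one (hχ x hx),
      mul_rpow (by positivity) (by positivity), mul_rpow (by positivity) (by positivity),
      ← rpow_mul hR.le, ← rpow_mul hR.le, ← hscale]
    ring
  · simp [image_eq_zero_of_notMem_tsupport fun h => hx (hφS h)]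

theorem IsSolution.isNormalizedSolution_cutoffBlowup (hsol : IsSolution Ω lam gam p θ u v)
    (hstable : IsStable Ω lam gam p θ u v) (hpθ : p * θ ≠ 1) (hΩ : IsOpen Ω) (hR : 0 < R)
    (χ : ContDiffBump (0 : 𝔼[N])) (hχ : χ.rIn = 1)
    (hχΩ : tsupport χ ⊆ (fun x => z + R • x) ⁻¹' Ω) {m : ℝ} (hm : 0 < m)
    (hle : ∫ x in ball 0 1, cutoffBlowup χ v z R (2 * (θ + 1) / (p * θ - 1)) x ^ 2 ≤ m ^ 2) :
    IsNormalizedSolution lam gam p θ m (cutoffBlowup χ u z R (2 * (p + 1) / (p * θ - 1)))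
      (cutoffBlowup χ v z R (2 * (θ + 1) / (p * θ - 1))) := by
  have ⟨hu, hv, hu₀, hv₀, hlapu, hlapv⟩ := hsol
  have hk : (p * θ - 1) * (p * θ - 1)⁻¹ = 1 := mul_inv_cancel₀ (sub_ne_zero.mpr hpθ)
  set α := 2 * (p + 1) / (p * θ - 1) with hα
  set β := 2 * (θ + 1) / (p * θ - 1) with hβ
  have hone : ∀ x ∈ ball (0 : 𝔼[N]) 1, χ =ᶠ[𝓝 x] 1 := fun x hx =>
    χ.eventuallyEq_one_of_mem_ball (hχ ▸ hx)
  have hone' : ∀ x ∈ ball (0 : 𝔼[N]) 1, χ x = 1 := fun x hx => (hone x hx).self_of_nhds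
  have hballΩ : ball (0 : 𝔼[N]) 1 ⊆ (fun x => z + R • x) ⁻¹' Ω := fun x hx =>
    hχΩ (subset_tsupport χ (by simp [hone' x hx]))
  exact
  { contDiff_left := contDiff_cutoffBlowup hΩ hu χ.contDiff hχΩ α
    contDiff_right := contDiff_cutoffBlowup hΩ hv χ.contDiff hχΩ β
    hasCompactSupport_right := χ.hasCompactSupport.mul_right
    pos_left := fun x hx => cutoffBlowup_pos (hone' x hx) (hu₀ _ (hballΩ hx)) hR α
    pos_right := fun x hx => cutoffBlowup_pos (hone' x hx) (hv₀ _ (hballΩ hx)) hR β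
    neg_lap_left := fun x hx => neg_lap_cutoffBlowup (hone x hx)
      (hu.contDiffAt (hΩ.mem_nhds (hballΩ hx))) hR (hv₀ _ (hballΩ hx)) (hlapu _ (hballΩ hx)) (by
        rw [hα, hβ]; linear_combination (-2) * hk)
    neg_lap_right := fun x hx => neg_lap_cutoffBlowup (hone x hx)
      (hv.contDiffAt (hΩ.mem_nhds (hballΩ hx))) hR (hu₀ _ (hballΩ hx)) (hlapv _ (hballΩ hx)) (by
        rw [hα, hβ]; linear_combination (-2) * hk)
    stable := fun φ hφ hφc hφ₁ =>
      hstable.integral_cutoffBlowup_mul_sq_le hsol hΩ hR hballΩ hone' (by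
        rw [hα, hβ]; linear_combination 2 * hk) hφ hφc hφ₁
    size_pos := hm
    setIntegral_sq_le := hle }

theorem IsSolution.exists_isNormalizedSolution (hsol : IsSolution Ω lam gam p θ u v)
    (hstable : IsStable Ω lam gam p θ u v) (hpθ : p * θ ≠ 1) (hΩ : IsOpen Ω) (hR : 0 < R)
    (hball : closedBall z R ⊆ Ω) :
    ∃ (m : ℝ) (U V : 𝔼[N] → ℝ), IsNormalizedSolution lam gam p θ m U V ∧
      R ^ (2 * (2 * (θ + 1) / (p * θ - 1)) - N : ℝ) * ∫ x in ball z R, (v x + 1) ^ 2 = m ^ 2 ∧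
      ∀ ρ ∈ Ioc (0 : ℝ) 1, (ρ * R) ^ (2 * (2 * (θ + 1) / (p * θ - 1)) - N : ℝ) *
          ∫ x in ball z (ρ * R), (v x + 1) ^ 2 =
        ρ ^ (2 * (2 * (θ + 1) / (p * θ - 1)) - N : ℝ) * ∫ x in ball 0 ρ, V x ^ 2 := by
  have hpre : closedBall (0 : 𝔼[N]) 1 ⊆ (fun x => z + R • x) ⁻¹' Ω := fun x hx => hball <| by
    rw [mem_closedBall_zero_iff] at hx
    rw [mem_closedBall, dist_self_add_left, norm_smul, norm_of_nonneg hR.le]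
    exact mul_le_of_le_one_right hR.le hx
  obtain ⟨χ, hχ, hχΩ⟩ :=
    exists_contDiffBump_tsupport_subset (hΩ.preimage (by fun_prop)) one_pos hpre
  set V := cutoffBlowup χ v z R (2 * (θ + 1) / (p * θ - 1))
  have hone : ∀ x ∈ ball (0 : 𝔼[N]) 1, χ x = 1 := fun x hx =>
    χ.one_of_mem_closedBall (hχ ▸ ball_subset_closedBall hx)
  have hV : Continuous V := (contDiff_cutoffBlowup hΩ hsol.2.1 χ.contDiff hχΩ _).continuous
  have hpos : 0 < ∫ x in ball 0 1, V x ^ 2 := by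
    rw [setIntegral_pos_iff_support_of_nonneg_ae (.of_forall fun x => sq_nonneg _)
      (integrableOn_ball_of_continuous (hV.pow 2) 0 1)]
    refine (measure_ball_pos volume 0 one_pos).trans_le (measure_mono fun x hx => ⟨?_, hx⟩)
    exact (pow_pos (cutoffBlowup_pos (hone x hx)
      (hsol.2.2.2.1 _ (hpre (ball_subset_closedBall hx))) hR _) 2).ne'
  have hscale : ∀ ρ ∈ Ioc (0 : ℝ) 1, _ := fun ρ hρ =>
    (rpow_mul_setIntegral_cutoffBlowup_sq (f := v) (z := z)
      (fun x hx => hone x (ball_subset_ball hρ.2 hx)) hR hρ.1.le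
      (2 * (θ + 1) / (p * θ - 1))).symm
  refine ⟨√(∫ x in ball 0 1, V x ^ 2), _, V,
    hsol.isNormalizedSolution_cutoffBlowup hstable hpθ hΩ hR χ hχ hχΩ (sqrt_pos.mpr hpos)
      (sq_sqrt hpos.le).ge, ?_, hscale⟩
  simpa [sq_sqrt hpos.le] using hscale 1 ⟨one_pos, le_rfl⟩

end Rescaling

/-- ε-regularity decay estimate, with `β = 2(θ+1)/(pθ−1)`. -/
theorem stmt19 {N : ℕ} (hN : 3 ≤ N) (p θ lam gam : ℝ)
    (hp : 1 < p) (hpθ : p ≤ θ) (hlam : 0 < lam) (hgam : 0 < gam) :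
    ∃ ε₁ τ : ℝ, 0 < ε₁ ∧ 0 < τ ∧ τ < 1 ∧
      ∀ Ω : Set (EuclideanSpace ℝ (Fin N)), IsOpen Ω →
      ∀ u v : EuclideanSpace ℝ (Fin N) → ℝ,
        IsSolution Ω lam gam p θ u v → IsStable Ω lam gam p θ u v →
      ∀ (z : EuclideanSpace ℝ (Fin N)) (R₀ : ℝ), 0 < R₀ → closedBall z R₀ ⊆ Ω →
        R₀ ^ (2 * (2 * (θ + 1) / (p * θ - 1)) - (N : ℝ)) *
            (∫ x in ball z R₀, (v x + 1) ^ 2) ≤ ε₁ →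
        (τ * R₀) ^ (2 * (2 * (θ + 1) / (p * θ - 1)) - (N : ℝ)) *
            (∫ x in ball z (τ * R₀), (v x + 1) ^ 2)
          ≤ (R₀ ^ (2 * (2 * (θ + 1) / (p * θ - 1)) - (N : ℝ)) *
              ∫ x in ball z R₀, (v x + 1) ^ 2) / 2 := by
  have hpθ₁ : 1 < p * θ := one_lt_mul_of_lt_of_le hp (hp.le.trans hpθ)
  have hβ : 0 < 2 * (θ + 1) / (p * θ - 1) := div_pos (by linarith) (by linarith)
  obtain ⟨ε₁, τ, hε₁, hτ, hτ₁, hdecay⟩ :=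
    exists_rpow_mul_setIntegral_ball_sq_le hN hp hpθ hlam hgam hβ
  refine ⟨ε₁, τ, hε₁, hτ, hτ₁, fun Ω hΩ u v hsol hstable z R hR hball hG => ?_⟩
  obtain ⟨m, U, V, hUV, hm, hscale⟩ :=
    hsol.exists_isNormalizedSolution hstable hpθ₁.ne' hΩ hR hball
  rw [hm] at hG ⊢
  rw [hscale τ ⟨hτ, hτ₁.le⟩]
  exact hdecay m U V hUV hG
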